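/- arXiv:q-alg/9507029 — 4 statements merged into one kernel-verified Lean document; each statement's English description precedes it below -/
import Mathlib

section
/- Associated graded algebra: The associated graded algebra gr Y = ⊕_{p≥0} Y_p/Y_{p−1} of the filtered algebra Y(gl(M|N)) (with Y_{−1} = 0) is isomorphic as a ℂ-algebra to the free supercommutative polynomial algebra G[X] on variables X^a_b[n] (a,b ∈ {1,…,M+N}, n ≥ 1), where X^a_b[n] is an ordinary (even, polynomial) indeterminate if [a]+[b] is even and a Grassmann (odd, anticommuting, square-zero) variable if [a]+[b] is odd; the isomorphism sends the image of t^a_b[n] in Y_n/Y_{n−1} to X^a_b[n]. -/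
/-!
Write `gr` for the associated graded algebra.  The supercommutator of two generators lies in lower
degree by the defining relations, so the words of a given degree induce a surjection `G[X] → gr`
(`piY_mem_of_piG`).  The content of the theorem is its injectivity, a Poincaré–Birkhoff–Witt
statement, which is proved by letting the super Yangian act on tensor products.

With the additional mode `t^a_b[0] = (-1)^[b] δ_ab`, the defining relations are equivalent to the
RTT relation for the matrix of generating series, and the solutions of the latter are closed under
matrix products of supercommuting solutions (`rtt_mul`, `IsTMat.mul`).  The operators
`e_xj z^s` of `gl_k[z]`, with Koszul signs, give a solution (`isTMat_evalMat`); they act on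
`gl_k[z]` with a vacuum adjoined, which is sent by `e_xj z^s` to `e_xj z^s` itself.  Let `W_l` be
the tensor product of `l` such factors and `Ω` its vacuum.  The generator `t^x_j[s+1]` acts on `W_l`
by the sum over the factors of `e_xj z^s`, up to terms of lower degree or involving several
factors.  Hence a word of degree `p` and length `l` applied to `Ω` has, as leading part, the sum
over all ways of distributing its letters among the `l` factors, one to each, and multiplying the
variables so obtained gives `l!` times the monomial of the word in `G[X]`.  Words of lower degree
contribute nothing in total degree `p`, and a word of degree `p` and of length greater than `l` has
only components of lower degree when every factor is excited.  These facts are proved by adding one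
factor at a time (`Vac.next_tw_snd`, `Sep.main_sum`, `Sep.next`), and give linear maps from the
super Yangian to `G[X]` (`exists_functional`).

If a homogeneous element of degree `p` of the free algebra maps to `Y_{p-1}`, these maps show, by
induction on the word length, that each of its components of given word length vanishes in `G[X]`
(`piG_of_piY_mem`).  So the symbol of an element of `Y_p` is a well-defined element of `G[X]`.
-/


open scoped BigOperators TensorProduct

namespace SY

/-- The parity `[a]` of an index: `0` if `a ≤ M` (1-based), `1` otherwise.  Indices are 0-based
`Fin (M+N)`, so `[a] = 0` iff `a < M`. -/
def pa (M : ℕ) {k : ℕ} (a : Fin k) : ℕ := if (a : ℕ) < M then 0 else 1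

/-- Index type for the generators of the super Yangian: `(a, b, k)` encodes `t^a_b[k+1]`. -/
abbrev Gen (M N : ℕ) := Fin (M + N) × Fin (M + N) × ℕ

/-- The free algebra on the generators. -/
abbrev F (M N : ℕ) := FreeAlgebra ℂ (Gen M N)

/-- `T M N a b n` is the free-algebra element corresponding to `t^a_b[n]` (`n ≥ 1`). -/
noncomputable def T (M N : ℕ) (a b : Fin (M + N)) (n : ℕ) : F M N :=
  FreeAlgebra.ι ℂ ((a, b, n - 1) : Gen M N)

noncomputable def sgn1 (M : ℕ) {k : ℕ} (a1 b1 a2 b2 : Fin k) : ℂ :=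
  (-1 : ℂ) ^ ((pa M a1 + pa M b1) * (pa M a2 + pa M b2))

noncomputable def sgn2 (M : ℕ) {k : ℕ} (a1 b1 a2 : Fin k) : ℂ :=
  (-1 : ℂ) ^ (pa M a1 * pa M a2 + pa M b1 * (pa M a1 + pa M a2))

/-- The defining relations of the super Yangian `Y(gl(M|N))`. -/
inductive Rel (M N : ℕ) : F M N → F M N → Prop
  | defining (a1 b1 a2 b2 : Fin (M + N)) (m n : ℕ) (hm : 1 ≤ m) (hn : 1 ≤ n) :
      Rel M N
        (T M N a1 b1 m * T M N a2 b2 n - sgn1 M a1 b1 a2 b2 • (T M N a2 b2 n * T M N a1 b1 m))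
        ((if b1 = a2 then T M N a1 b2 (m + n - 1) else 0)
          - sgn1 M a1 b1 a2 b2 • (if b2 = a1 then T M N a2 b1 (m + n - 1) else 0)
          + sgn2 M a1 b1 a2 •
              ∑ r ∈ Finset.Ico 1 (min m n),
                (T M N a2 b1 r * T M N a1 b2 (m + n - 1 - r)
                  - T M N a2 b1 (m + n - 1 - r) * T M N a1 b2 r))

/-- The super Yangian `Y(gl(M|N))` as the quotient of the free algebra by the defining
relations. -/
abbrev Y (M N : ℕ) := RingQuot (Rel M N)

/-- The generator `t^a_b[n]` of `Y(gl(M|N))` (for `n ≥ 1`). -/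
noncomputable def t (M N : ℕ) (a b : Fin (M + N)) (n : ℕ) : Y M N :=
  RingQuot.mkAlgHom ℂ (Rel M N) (T M N a b n)

/-- The generator of `Y(gl(M|N))` indexed by `g : Gen M N`, i.e. `t^a_b[k+1]` for
`g = (a,b,k)`. -/
noncomputable def tg (M N : ℕ) (g : Gen M N) : Y M N :=
  RingQuot.mkAlgHom ℂ (Rel M N) (FreeAlgebra.ι ℂ g)

/-- `g` indexes an odd generator iff `[a]+[b]` is odd. -/
abbrev oddG (M N : ℕ) (g : Gen M N) : Prop := (pa M g.1 + pa M g.2.1) % 2 = 1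

/-- A representation of `Y(gl(M|N))` is irreducible if the space is nonzero and the only
invariant subspaces are `⊥` and `⊤`. -/
def IsIrreducibleRep (M N : ℕ) {V : Type*} [AddCommGroup V] [Module ℂ V]
    (ρ : Y M N →ₐ[ℂ] Module.End ℂ V) : Prop :=
  (∃ v : V, v ≠ 0) ∧
    ∀ W : Submodule ℂ V, (∀ y : Y M N, ∀ w ∈ W, ρ y w ∈ W) → W = ⊥ ∨ W = ⊤

/-- `v` is a maximal vector of weight `Λ = (λ_a[n])`. -/
def IsMaximalVec (M N : ℕ) {V : Type*} [AddCommGroup V] [Module ℂ V]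
    (ρ : Y M N →ₐ[ℂ] Module.End ℂ V) (v : V) (Λ : Fin (M + N) → ℕ → ℂ) : Prop :=
  v ≠ 0 ∧
    (∀ a b : Fin (M + N), a < b → ∀ n : ℕ, 1 ≤ n → ρ (t M N a b n) v = 0) ∧
    (∀ (a : Fin (M + N)) (n : ℕ), 1 ≤ n → ρ (t M N a a n) v = Λ a n • v)


/-- The filtration on `Y(gl(M|N))`: `filt M N p` is the span of all products of generators
of total degree `≤ p` (including the empty product `1`). -/
noncomputable def filt (M N : ℕ) (p : ℕ) : Submodule ℂ (Y M N) :=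
  Submodule.span ℂ
    {x | ∃ l : List (Gen M N),
      (l.map fun g => g.2.2 + 1).sum ≤ p ∧ x = (l.map (tg M N)).prod}

/-- `Y_{p-1}`, with the convention `Y_{-1} = 0`. -/
noncomputable def filtPred (M N : ℕ) : ℕ → Submodule ℂ (Y M N)
  | 0 => ⊥
  | p + 1 => filt M N p

/-- Relations of the free supercommutative polynomial algebra `G[X]`: the variables
supercommute, and the odd (Grassmann) variables square to zero. -/
inductive GRel (M N : ℕ) : F M N → F M N → Prop
  | comm (g g' : Gen M N) :
      GRel M N (FreeAlgebra.ι ℂ g * FreeAlgebra.ι ℂ g')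
        (((-1 : ℂ) ^ (((pa M g.1 + pa M g.2.1) % 2) * ((pa M g'.1 + pa M g'.2.1) % 2))) •
          (FreeAlgebra.ι ℂ g' * FreeAlgebra.ι ℂ g))
  | sq (g : Gen M N) (h : oddG M N g) :
      GRel M N (FreeAlgebra.ι ℂ g * FreeAlgebra.ι ℂ g) 0

/-- The free supercommutative polynomial algebra `G[X]` on the variables `X^a_b[n]`
(`X^a_b[n]` is an ordinary indeterminate if `[a]+[b]` is even and a Grassmann variable if
`[a]+[b]` is odd). -/
abbrev GX (M N : ℕ) := RingQuot (GRel M N)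

/-- The variable `X^a_b[k+1]` of `G[X]` indexed by `g = (a,b,k)`. -/
noncomputable def Xg (M N : ℕ) (g : Gen M N) : GX M N :=
  RingQuot.mkAlgHom ℂ (GRel M N) (FreeAlgebra.ι ℂ g)

/-- The degree-`p` homogeneous component of `G[X]`: the span of monomials of total degree
exactly `p` (degree of `X^a_b[n]` being `n`). -/
noncomputable def gpiece (M N : ℕ) (p : ℕ) : Submodule ℂ (GX M N) :=
  Submodule.span ℂ
    {x | ∃ l : List (Gen M N),
      (l.map fun g => g.2.2 + 1).sum = p ∧ x = (l.map (Xg M N)).prod}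

/-! ### Products of solutions of the RTT relation -/

theorem pa_cases (M : ℕ) {k : ℕ} (a : Fin k) : pa M a = 0 ∨ pa M a = 1 := by
  unfold pa; split <;> simp

/-- Products of solutions of the RTT relation are solutions.  The central elements `d`, `e` play
the role of `v - u` and of `u v` for the two spectral parameters; `T1`, `T2` (resp. `L1`, `L2`) are
the values of one matrix at the two parameters.  The two matrices supercommute entrywise
(`h12`, `h21`), and `P` is their matrix product, with the sign `(-1)^[x]` on the summation index
dictated by the normalization of the constant term. -/
theorem rtt_mul (M : ℕ) {k : ℕ} {R : Type*} [Ring R] [Algebra ℂ R] (d e : R)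
    (hd : ∀ z, d * z = z * d) (he : ∀ z, e * z = z * e)
    (T1 T2 L1 L2 : Fin k → Fin k → R)
    (hT : ∀ i j a b, d * (T1 i j * T2 a b - sgn1 M i j a b • (T2 a b * T1 i j)) =
      sgn2 M i j a • (e * (T1 a j * T2 i b - T2 a j * T1 i b)))
    (hL : ∀ i j a b, d * (L1 i j * L2 a b - sgn1 M i j a b • (L2 a b * L1 i j)) =
      sgn2 M i j a • (e * (L1 a j * L2 i b - L2 a j * L1 i b)))
    (h12 : ∀ i j a b, L1 i j * T2 a b = sgn1 M i j a b • (T2 a b * L1 i j))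
    (h21 : ∀ i j a b, L2 i j * T1 a b = sgn1 M i j a b • (T1 a b * L2 i j))
    (P1 P2 : Fin k → Fin k → R)
    (hP1 : ∀ i j, P1 i j = ∑ x, ((-1 : ℂ) ^ pa M x) • (T1 i x * L1 x j))
    (hP2 : ∀ i j, P2 i j = ∑ x, ((-1 : ℂ) ^ pa M x) • (T2 i x * L2 x j))
    (i j a b : Fin k) :
    d * (P1 i j * P2 a b - sgn1 M i j a b • (P2 a b * P1 i j)) =
      sgn2 M i j a • (e * (P1 a j * P2 i b - P2 a j * P1 i b)) := by
  have e12 : ∀ i j a b, P1 i j * P2 a b = ∑ x, ∑ y,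
      ((-1 : ℂ) ^ pa M x * (-1 : ℂ) ^ pa M y * sgn1 M x j a y) •
        (T1 i x * T2 a y * (L1 x j * L2 y b)) := by
    intro i j a b
    rw [hP1, hP2, Finset.sum_mul]
    refine Finset.sum_congr rfl fun x _ => ?_
    rw [Finset.mul_sum]
    refine Finset.sum_congr rfl fun y _ => ?_
    have : T1 i x * L1 x j * (T2 a y * L2 y b) = T1 i x * (L1 x j * T2 a y) * L2 y b := by
      noncomm_ring
    rw [smul_mul_assoc, mul_smul_comm, this, h12]
    simp only [smul_mul_assoc, mul_smul_comm, smul_smul, mul_assoc]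
  have e21 : ∀ i j a b, P2 a b * P1 i j = ∑ x, ∑ y,
      ((-1 : ℂ) ^ pa M x * (-1 : ℂ) ^ pa M y * sgn1 M y b i x) •
        (T2 a y * T1 i x * (L2 y b * L1 x j)) := by
    intro i j a b
    rw [hP1, hP2, Finset.sum_mul, Finset.sum_comm]
    refine Finset.sum_congr rfl fun y _ => ?_
    rw [Finset.mul_sum]
    refine Finset.sum_congr rfl fun x _ => ?_
    have : T2 a y * L2 y b * (T1 i x * L1 x j) = T2 a y * (L2 y b * T1 i x) * L1 x j := by
      noncomm_ring
    rw [smul_mul_assoc, mul_smul_comm, this, h21]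
    simp only [smul_mul_assoc, mul_smul_comm, smul_smul, mul_assoc]
    congr 1; ring
  have key : ∀ x y, d * (T1 i x * T2 a y * (L1 x j * L2 y b)) =
      (sgn1 M i x a y * sgn1 M x j y b) • (d * (T2 a y * T1 i x * (L2 y b * L1 x j)))
      + (sgn1 M i x a y * sgn2 M x j y) • (e * (T2 a y * T1 i x * (L1 y j * L2 x b)))
      - (sgn1 M i x a y * sgn2 M x j y) • (e * (T2 a y * T1 i x * (L2 y j * L1 x b)))
      + sgn2 M i x a • (e * (T1 a x * T2 i y * (L1 x j * L2 y b)))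
      - sgn2 M i x a • (e * (T2 a x * T1 i y * (L1 x j * L2 y b))) := by
    intro x y
    have h1 := congrArg (· * (L1 x j * L2 y b)) (hT i x a y)
    have h2 := congrArg (T2 a y * T1 i x * ·) (hL x j y b)
    simp only [mul_sub, sub_mul, smul_sub, mul_smul_comm, smul_mul_assoc] at h1 h2
    have sw : ∀ z w : R, z * (d * w) = d * (z * w) := fun z w => by
      rw [← mul_assoc, ← hd, mul_assoc]
    have sw' : ∀ z w : R, z * (e * w) = e * (z * w) := fun z w => by
      rw [← mul_assoc, ← he, mul_assoc]
    simp only [sw, sw'] at h2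
    rw [mul_assoc d, mul_assoc d, mul_assoc e, mul_assoc e] at h1
    linear_combination (norm := module) h1 + (sgn1 M i x a y) • h2
  rw [mul_sub, e12, mul_smul_comm, e21, mul_sub, e12, e21]
  simp only [Finset.mul_sum, Finset.smul_sum, mul_smul_comm, smul_sub, key, smul_add]
  simp only [Finset.sum_add_distrib, Finset.sum_sub_distrib, smul_smul]
  rw [Finset.sum_comm (f := fun x y => (((-1 : ℂ) ^ pa M x * (-1 : ℂ) ^ pa M y * sgn1 M x j a y) * (sgn1 M i x a y * sgn2 M x j y)) • (e * (T2 a y * T1 i x * (L1 y j * L2 x b))))]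
  have c1 : ∀ x y, (-1 : ℂ) ^ pa M x * (-1 : ℂ) ^ pa M y * sgn1 M x j a y *
      (sgn1 M i x a y * sgn1 M x j y b) =
      sgn1 M i j a b * ((-1 : ℂ) ^ pa M x * (-1 : ℂ) ^ pa M y * sgn1 M y b i x) := by
    intro x y
    unfold sgn1
    rcases pa_cases M x with h | h <;> rcases pa_cases M y with h' | h' <;>
    rcases pa_cases M i with h1 | h1 <;> rcases pa_cases M j with h2 | h2 <;>
    rcases pa_cases M a with h3 | h3 <;> rcases pa_cases M b with h4 | h4 <;>
    norm_num [h, h', h1, h2, h3, h4]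
  have c2 : ∀ x y, (-1 : ℂ) ^ pa M x * (-1 : ℂ) ^ pa M y * sgn1 M x j a y *
      (sgn1 M i x a y * sgn2 M x j y) =
      (-1 : ℂ) ^ pa M y * (-1 : ℂ) ^ pa M x * sgn1 M y j a x * sgn2 M i y a := by
    intro x y
    unfold sgn1 sgn2
    rcases pa_cases M x with h | h <;> rcases pa_cases M y with h' | h' <;>
    rcases pa_cases M i with h1 | h1 <;> rcases pa_cases M j with h2 | h2 <;>
    rcases pa_cases M a with h3 | h3 <;>
    norm_num [h, h', h1, h2, h3]
  have c3 : ∀ x y, (-1 : ℂ) ^ pa M x * (-1 : ℂ) ^ pa M y * sgn1 M x j a y * sgn2 M i x a =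
      sgn2 M i j a * ((-1 : ℂ) ^ pa M x * (-1 : ℂ) ^ pa M y * sgn1 M x j i y) := by
    intro x y
    unfold sgn1 sgn2
    rcases pa_cases M x with h | h <;> rcases pa_cases M y with h' | h' <;>
    rcases pa_cases M i with h1 | h1 <;> rcases pa_cases M j with h2 | h2 <;>
    rcases pa_cases M a with h3 | h3 <;>
    norm_num [h, h', h1, h2, h3]
  have c4 : ∀ x y, (-1 : ℂ) ^ pa M x * (-1 : ℂ) ^ pa M y * sgn1 M x j a y *
      (sgn1 M i x a y * sgn2 M x j y) =
      sgn2 M i j a * ((-1 : ℂ) ^ pa M x * (-1 : ℂ) ^ pa M y * sgn1 M y j i x) := by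
    intro x y
    unfold sgn1 sgn2
    rcases pa_cases M x with h | h <;> rcases pa_cases M y with h' | h' <;>
    rcases pa_cases M i with h1 | h1 <;> rcases pa_cases M j with h2 | h2 <;>
    rcases pa_cases M a with h3 | h3 <;>
    norm_num [h, h', h1, h2, h3]
  simp only [c1]
  have c2' : ∑ x, ∑ y, ((-1 : ℂ) ^ pa M y * (-1 : ℂ) ^ pa M x * sgn1 M y j a x *
      (sgn1 M i y a x * sgn2 M y j x)) • (e * (T2 a x * T1 i y * (L1 x j * L2 y b))) =
      ∑ x, ∑ y, ((-1 : ℂ) ^ pa M x * (-1 : ℂ) ^ pa M y * sgn1 M x j a y * sgn2 M i x a) •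
        (e * (T2 a x * T1 i y * (L1 x j * L2 y b))) := by
    simp only [c2]
  rw [c2']
  simp only [c3, c4]
  abel

/-! ### The RTT relation in modes -/

theorem sgn_aux1 (M : ℕ) {k : ℕ} (i a : Fin k) : sgn2 M i a a * (-1) ^ pa M a = 1 := by
  unfold sgn2
  rcases pa_cases M a with h1 | h1 <;> rcases pa_cases M i with h2 | h2 <;> norm_num [h1, h2]

theorem sgn_aux2 (M : ℕ) {k : ℕ} (i j a : Fin k) :
    sgn2 M i j a * (-1) ^ pa M i = sgn1 M i j a i := by
  unfold sgn2 sgn1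
  rcases pa_cases M a with h1 | h1 <;> rcases pa_cases M i with h2 | h2 <;>
    rcases pa_cases M j with h3 | h3 <;> norm_num [h1, h2, h3]

/-- `τ i j n` are the modes of a solution of the RTT relation of `gl(M|N)` in the algebra `A`.
The modes are completed by the mode `0`, equal to `(-1)^[j] δ_ij`; with this convention the
relation in `Y(gl(M|N))` takes the uniform form `rel`, valid for all `m, n ≥ 0`. -/
structure IsTMat (M : ℕ) {k : ℕ} {A : Type*} [Ring A] [Algebra ℂ A]
    (τ : Fin k → Fin k → ℕ → A) : Prop where
  zero : ∀ i j, τ i j 0 = if i = j then ((-1 : ℂ) ^ pa M j) • (1 : A) else 0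
  rel : ∀ i j a b m n,
    (τ i j (m + 1) * τ a b n - sgn1 M i j a b • (τ a b n * τ i j (m + 1)))
      - (τ i j m * τ a b (n + 1) - sgn1 M i j a b • (τ a b (n + 1) * τ i j m))
    = sgn2 M i j a • (τ a j m * τ i b n - τ a j n * τ i b m)

section series
open PowerSeries
variable {A : Type*} [Ring A]

/-- The generating series of `f` in the inner variable of `A⟦X⟧⟦X⟧`. -/
noncomputable def ser1 (f : ℕ → A) : A⟦X⟧⟦X⟧ := C (mk f)
/-- The generating series of `f` in the outer variable of `A⟦X⟧⟦X⟧`. -/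
noncomputable def ser2 (f : ℕ → A) : A⟦X⟧⟦X⟧ := PowerSeries.map C (mk f)

/-- The coefficient of `u^m v^n`, with `u = C X` the inner and `v = X` the outer variable. -/
noncomputable def cf (m n : ℕ) (z : A⟦X⟧⟦X⟧) : A := coeff m (coeff n z)

theorem cf_ext {z w : A⟦X⟧⟦X⟧} (h : ∀ m n, cf m n z = cf m n w) : z = w := by
  ext n m; exact h m n

theorem cf_sub (m n : ℕ) (z w : A⟦X⟧⟦X⟧) : cf m n (z - w) = cf m n z - cf m n w := by simp [cf]
theorem cf_smul [Algebra ℂ A] (m n : ℕ) (c : ℂ) (z : A⟦X⟧⟦X⟧) : cf m n (c • z) = c • cf m n z := by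
  simp only [cf]
  rfl
theorem cf_12 (m n : ℕ) (f g : ℕ → A) : cf m n (ser1 f * ser2 g) = f m * g n := by
  simp [cf, ser1, ser2]
theorem cf_21 (m n : ℕ) (f g : ℕ → A) : cf m n (ser2 g * ser1 f) = g n * f m := by
  simp [cf, ser1, ser2]
theorem cf_y (m n : ℕ) (z : A⟦X⟧⟦X⟧) : cf m (n + 1) (X * z) = cf m n z := by
  simp [cf, coeff_succ_X_mul]
theorem cf_y0 (m : ℕ) (z : A⟦X⟧⟦X⟧) : cf m 0 (X * z) = 0 := by
  simp [cf]
theorem cf_x (m n : ℕ) (z : A⟦X⟧⟦X⟧) : cf (m + 1) n (C X * z) = cf m n z := by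
  simp [cf, coeff_succ_X_mul]
theorem cf_x0 (n : ℕ) (z : A⟦X⟧⟦X⟧) : cf 0 n (C X * z) = 0 := by
  simp [cf]
theorem CX_comm (z : A⟦X⟧⟦X⟧) : C X * z = z * C X := by
  ext n m
  rw [coeff_C_mul, coeff_mul_C, X_mul]

variable [Algebra ℂ A]

theorem sgn1_diag (M : ℕ) {k : ℕ} (i a b : Fin k) : sgn1 M i i a b = 1 := by
  unfold sgn1
  rcases pa_cases M i with h | h <;> norm_num [h]

theorem sgn1_diag' (M : ℕ) {k : ℕ} (i a b : Fin k) : sgn1 M a b i i = 1 := by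
  unfold sgn1
  rcases pa_cases M i with h | h <;> norm_num [h, mul_comm _ 2, pow_mul]

/-- Mode `0` is scalar, so it supercommutes with every mode. -/
theorem D_zero_left (M : ℕ) {k : ℕ} {τ : Fin k → Fin k → ℕ → A} (h : ∀ i j, τ i j 0 = if i = j then ((-1 : ℂ) ^ pa M j) • (1 : A) else 0)
    (i j a b : Fin k) (n : ℕ) : τ i j 0 * τ a b n - sgn1 M i j a b • (τ a b n * τ i j 0) = 0 := by
  rw [h]
  split_ifs with e
  · subst e; simp [sgn1_diag]
  · simp
theorem D_zero_right (M : ℕ) {k : ℕ} {τ : Fin k → Fin k → ℕ → A} (h : ∀ i j, τ i j 0 = if i = j then ((-1 : ℂ) ^ pa M j) • (1 : A) else 0)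
    (i j a b : Fin k) (n : ℕ) : τ i j n * τ a b 0 - sgn1 M i j a b • (τ a b 0 * τ i j n) = 0 := by
  rw [h a]
  split_ifs with e
  · subst e; simp [sgn1_diag']
  · simp

/-- The mode relations are equivalent to the RTT relation
`(v - u) [T(u), T(v)} = ± u v (T(u) T(v) - T(v) T(u))` between generating series; the boundary
coefficients carry no information because mode `0` is scalar. -/
theorem series_iff (M : ℕ) {k : ℕ} (τ : Fin k → Fin k → ℕ → A)
    (h0 : ∀ i j, τ i j 0 = if i = j then ((-1 : ℂ) ^ pa M j) • (1 : A) else 0) :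
    IsTMat M τ ↔ ∀ i j a b,
      (X - C X : A⟦X⟧⟦X⟧) * (ser1 (τ i j) * ser2 (τ a b) -
          sgn1 M i j a b • (ser2 (τ a b) * ser1 (τ i j))) =
      sgn2 M i j a • (C X * X * (ser1 (τ a j) * ser2 (τ i b) - ser2 (τ a j) * ser1 (τ i b))) := by
  have key : ∀ i j a b m n, cf (m + 1) (n + 1) ((X - C X : A⟦X⟧⟦X⟧) * (ser1 (τ i j) * ser2 (τ a b) -
          sgn1 M i j a b • (ser2 (τ a b) * ser1 (τ i j)))) =
        (τ i j (m + 1) * τ a b n - sgn1 M i j a b • (τ a b n * τ i j (m + 1)))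
      - (τ i j m * τ a b (n + 1) - sgn1 M i j a b • (τ a b (n + 1) * τ i j m)) := by
    intro i j a b m n
    simp only [sub_mul, cf_sub, cf_smul, cf_12, cf_21, cf_x, cf_y]
  have key' : ∀ i j a b m n, cf (m + 1) (n + 1) (sgn2 M i j a • (C X * X * (ser1 (τ a j) * ser2 (τ i b) - ser2 (τ a j) * ser1 (τ i b)))) = sgn2 M i j a • (τ a j m * τ i b n - τ a j n * τ i b m) := by
    intro i j a b m n
    simp only [mul_assoc, cf_sub, cf_smul, cf_12, cf_21, cf_x, cf_y]
  constructor
  · intro h i j a b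
    refine cf_ext fun m n => ?_
    rcases m with _ | m
    · rcases n with _ | n
      · simp only [sub_mul, mul_assoc, cf_sub, cf_smul, cf_x0, cf_y0, sub_zero, smul_zero]
      · simp only [sub_mul, mul_assoc, cf_sub, cf_smul, cf_12, cf_21, cf_x0, cf_y, D_zero_left M h0, sub_zero, smul_zero]
    · rcases n with _ | n
      · simp only [sub_mul, mul_assoc, cf_sub, cf_smul, cf_12, cf_21, cf_x, cf_y0, D_zero_right M h0, sub_zero, smul_zero]
      · rw [key, key', h.rel]
  · intro h
    refine ⟨h0, fun i j a b m n => ?_⟩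
    rw [← key, ← key', h]

/-- The modes of the matrix product of two generating matrices; the sign on the summation index
compensates the normalization `(-1)^[j] δ_ij` of the modes `0`. -/
noncomputable def tmul (M : ℕ) {k : ℕ} (τ lam : Fin k → Fin k → ℕ → A) (i j : Fin k) (n : ℕ) : A :=
  ∑ x, ((-1 : ℂ) ^ pa M x) • ∑ p ∈ Finset.HasAntidiagonal.antidiagonal n, τ i x p.1 * lam x j p.2

theorem mk_tmul (M : ℕ) {k : ℕ} (τ lam : Fin k → Fin k → ℕ → A) (i j : Fin k) :
    mk (tmul M τ lam i j) = ∑ x, ((-1 : ℂ) ^ pa M x) • (mk (τ i x) * mk (lam x j)) := by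
  ext n
  simp [tmul, coeff_mul]

/-- The product of two supercommuting solutions is a solution: this is the coproduct of the super
Yangian, in the form in which it acts on a tensor product. -/
theorem IsTMat.mul (M : ℕ) {k : ℕ} {τ lam : Fin k → Fin k → ℕ → A} (hτ : IsTMat M τ)
    (hl : IsTMat M lam)
    (hc : ∀ i j a b m n, lam i j m * τ a b n = sgn1 M i j a b • (τ a b n * lam i j m)) :
    IsTMat M (tmul M τ lam) := by
  rw [series_iff]
  · intro i j a b
    have hz : ∀ z : A⟦X⟧⟦X⟧, X * z = z * X := fun z => X_mul
    refine rtt_mul M (X - C X) (C X * X) (fun z => ?_) (fun z => ?_) (fun i j => ser1 (τ i j))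
      (fun i j => ser2 (τ i j)) (fun i j => ser1 (lam i j)) (fun i j => ser2 (lam i j))
      ((series_iff M τ hτ.zero).1 hτ) ((series_iff M lam hl.zero).1 hl) ?_ ?_
      (fun i j => ser1 (tmul M τ lam i j)) (fun i j => ser2 (tmul M τ lam i j)) ?_ ?_ i j a b
    · rw [sub_mul, mul_sub, hz, CX_comm]
    · rw [mul_assoc, hz, ← mul_assoc, CX_comm, mul_assoc]
    · intro i j a b
      refine cf_ext fun m n => ?_
      rw [cf_12, cf_smul, cf_21, hc]
    · intro i j a b
      refine cf_ext fun m n => ?_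
      rw [cf_21, cf_smul, cf_12, hc]
    · intro i j
      simp only [ser1, mk_tmul]
      rw [map_sum]
      refine Finset.sum_congr rfl fun x _ => ?_
      rw [← map_mul]
      ext n m
      simp only [PowerSeries.coeff_smul, coeff_C]
      split_ifs <;> simp
    · intro i j
      simp only [ser2, mk_tmul]
      rw [map_sum]
      refine Finset.sum_congr rfl fun x _ => ?_
      rw [← map_mul]
      ext n m
      simp only [PowerSeries.coeff_smul, coeff_map, coeff_C]
      split_ifs <;> simp
  · intro i j
    simp only [tmul, Finset.Nat.antidiagonal_zero, Finset.sum_singleton, hτ.zero, hl.zero]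
    rw [Finset.sum_eq_single j]
    · by_cases e : i = j
      · rcases pa_cases M j with h | h <;> simp [e, h]
      · simp [e]
    · intro x _ hx
      simp [hx]
    · simp

/-- The supercommutator of two modes, obtained by telescoping `IsTMat.rel`. -/
theorem IsTMat.sum_form (M : ℕ) {k : ℕ} {τ : Fin k → Fin k → ℕ → A} (h : IsTMat M τ)
    (i j a b : Fin k) (m n : ℕ) :
    τ i j m * τ a b n - sgn1 M i j a b • (τ a b n * τ i j m) =
      sgn2 M i j a • ∑ r ∈ Finset.range m,
        (τ a j r * τ i b (m + n - 1 - r) - τ a j (m + n - 1 - r) * τ i b r) := by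
  induction m generalizing n with
  | zero => simp [D_zero_left M h.zero]
  | succ m ih =>
    have := h.rel i j a b m n
    rw [sub_eq_iff_eq_add, ih] at this
    rw [this, Finset.sum_range_succ, smul_add, add_comm]
    have e1 : m + 1 + n - 1 - m = n := by omega
    have e2 : m + (n + 1) - 1 = m + 1 + n - 1 := by omega
    rw [e1, e2]

theorem eq_zero_of_eq_neg {V : Type*} [AddCommGroup V] [Module ℂ V] {z : V} (hz : z = -z) :
    z = 0 := by
  have h2 : (2 : ℂ) • z = 0 := by
    rw [two_smul]
    nth_rewrite 2 [hz]
    exact add_neg_cancel z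
  exact (smul_eq_zero.1 h2).resolve_left two_ne_zero

/-- The solutions of the mode relations satisfy the defining relations of `Y(gl(M|N))`: in
`IsTMat.sum_form` the summands with `n ≤ r < m` cancel by antisymmetry under `r ↦ m + n - 1 - r`,
and the summand `r = 0` gives the two `δ` terms. -/
theorem IsTMat.min_form (M : ℕ) {k : ℕ} {τ : Fin k → Fin k → ℕ → A} (h : IsTMat M τ)
    (i j a b : Fin k) (m n : ℕ) (hm : 1 ≤ m) (hn : 1 ≤ n) :
    τ i j m * τ a b n - sgn1 M i j a b • (τ a b n * τ i j m) =
      (if j = a then τ i b (m + n - 1) else 0)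
          - sgn1 M i j a b • (if b = i then τ a j (m + n - 1) else 0)
          + sgn2 M i j a •
      ∑ r ∈ Finset.Ico 1 (min m n),
        (τ a j r * τ i b (m + n - 1 - r) - τ a j (m + n - 1 - r) * τ i b r) := by
  rw [h.sum_form]
  have e1 : ∑ r ∈ Finset.range m,
        (τ a j r * τ i b (m + n - 1 - r) - τ a j (m + n - 1 - r) * τ i b r) =
      ∑ r ∈ Finset.range (min m n),
        (τ a j r * τ i b (m + n - 1 - r) - τ a j (m + n - 1 - r) * τ i b r) := by
    rcases le_total m n with hmn | hmn
    · rw [min_eq_left hmn]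
    · rw [min_eq_right hmn, ← Finset.sum_range_add_sum_Ico _ hmn, add_eq_left]
      refine eq_zero_of_eq_neg ?_
      rw [← Finset.sum_neg_distrib]
      refine Finset.sum_nbij' (fun r => m + n - 1 - r) (fun r => m + n - 1 - r) ?_ ?_ ?_ ?_ ?_
      · intro r hr; simp only [Finset.mem_Ico] at hr ⊢; omega
      · intro r hr; simp only [Finset.mem_Ico] at hr ⊢; omega
      · intro r hr; simp only [Finset.mem_Ico] at hr ⊢; omega
      · intro r hr; simp only [Finset.mem_Ico] at hr ⊢; omega
      · intro r hr
        simp only [Finset.mem_Ico] at hr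
        have : m + n - 1 - (m + n - 1 - r) = r := by omega
        rw [this, neg_sub]
  rw [e1, Finset.range_eq_Ico, Finset.sum_eq_sum_Ico_succ_bot (by omega), smul_add]
  congr 1
  rw [h.zero, h.zero, Nat.sub_zero]
  rw [smul_sub]
  congr 1
  · by_cases e : j = a
    · subst e
      simp [smul_smul, sgn_aux1]
    · simp [e, Ne.symm e]
  · by_cases e : b = i
    · subst e
      simp [smul_smul, sgn_aux2]
    · simp [e, Ne.symm e]

end series

/-! ### The evaluation solution on one tensor factor -/

theorem neg_one_pow_add_self (x : ℕ) : ((-1 : ℂ)) ^ x * (-1) ^ x = 1 := by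
  rw [← pow_add, ← two_mul, pow_mul]; norm_num

/-- A solution of the RTT relation built from operators `E x j s` multiplying like the elements
`e_xj z^s` of `gl_k[z]` and an involution `K`, the parity of the first tensor factor: the
powers of `K` are the Koszul signs needed for odd `E x j s` to supercommute with that factor. -/
noncomputable def evalMat (M : ℕ) {k : ℕ} {A : Type*} [Ring A] [Algebra ℂ A] (K : A)
    (E : Fin k → Fin k → ℕ → A) (x j : Fin k) : ℕ → A
  | 0 => if x = j then ((-1 : ℂ) ^ pa M j) • (1 : A) else 0
  | s + 1 => K ^ (pa M x + pa M j) * E x j s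

section evalMat
variable {M : ℕ} {k : ℕ} {A : Type*} [Ring A] [Algebra ℂ A] {K : A} {E : Fin k → Fin k → ℕ → A}

theorem K_pow_pair {A : Type*} [Ring A] {K : A} (hK : K * K = 1) (x y z : ℕ) : K ^ (x + y) * K ^ (y + z) = K ^ (x + z) := by
  have h2 : K ^ y * K ^ y = 1 := by rw [← (Commute.refl K).mul_pow, hK, one_pow]
  rw [pow_add, pow_add, pow_add, mul_assoc, ← mul_assoc (K ^ y), h2, one_mul]

theorem evalMat_mul (hK : K * K = 1) (hKE : ∀ x j s, Commute K (E x j s))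
    (hE : ∀ x j s y l r, E x j s * E y l r = if j = y then E x l (s + r) else 0)
    (i j a b : Fin k) (m n : ℕ) :
    evalMat M K E i j (m + 1) * evalMat M K E a b (n + 1) =
      if j = a then evalMat M K E i b (m + n + 1) else 0 := by
  simp only [evalMat]
  rw [mul_assoc, ← mul_assoc (E _ _ _), ← ((hKE i j m).pow_left _).eq, mul_assoc (K ^ _), hE,
    ← mul_assoc]
  split_ifs with h
  · subst h
    rw [K_pow_pair hK]
  · simp

/-- The right-hand side of the mode relation when one of the two modes is `0`: it is the
supercommutator of `gl_k[z]`. -/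
theorem evalMat_zero_sub (i j a b : Fin k) (n : ℕ) :
    sgn2 M i j a • (evalMat M K E a j 0 * evalMat M K E i b n
      - evalMat M K E a j n * evalMat M K E i b 0) =
    (if j = a then evalMat M K E i b n else 0) -
      sgn1 M i j a b • (if b = i then evalMat M K E a j n else 0) := by
  rw [smul_sub]
  congr 1
  · by_cases e : j = a
    · subst e
      simp [evalMat, smul_smul, sgn_aux1]
    · simp [evalMat, e, Ne.symm e]
  · by_cases e : b = i
    · subst e
      simp [evalMat, smul_smul, sgn_aux2]
    · simp [evalMat, e, Ne.symm e]

theorem isTMat_evalMat (hK : K * K = 1) (hKE : ∀ x j s, Commute K (E x j s))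
    (hE : ∀ x j s y l r, E x j s * E y l r = if j = y then E x l (s + r) else 0) :
    IsTMat M (evalMat M K E) := by
  have h0 : ∀ i j, evalMat M K E i j 0 = if i = j then ((-1 : ℂ) ^ pa M j) • (1 : A) else 0 :=
    fun i j => rfl
  refine ⟨h0, fun i j a b m n => ?_⟩
  have hm := fun i j a b m n => evalMat_mul (M := M) hK hKE hE i j a b m n
  rcases m with _ | m <;> rcases n with _ | n
  · rw [D_zero_left M h0, D_zero_right M h0, sub_self, sub_self, smul_zero]
  · rw [D_zero_left M h0, evalMat_zero_sub, hm, hm]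
    simp
  · rw [D_zero_right M h0, ← neg_sub (evalMat M K E a j 0 * _), smul_neg, evalMat_zero_sub, hm, hm]
    simp
  · rw [hm, hm, hm, hm, hm, hm]
    have e1 : m + 1 + n + 1 = m + (n + 1) + 1 := by ring
    have e2 : n + (m + 1) + 1 = n + 1 + m + 1 := by ring
    have e3 : m + n = n + m := by ring
    rw [e1, e2, e3, sub_self, sub_self, smul_zero]

theorem evalMat_comm {τ : Fin k → Fin k → ℕ → A}
    (hK : ∀ i j n, K * τ i j n = ((-1 : ℂ) ^ (pa M i + pa M j)) • (τ i j n * K))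
    (hE : ∀ x j s a b n, Commute (E x j s) (τ a b n)) (i j a b : Fin k) (m n : ℕ) :
    evalMat M K E i j m * τ a b n = sgn1 M i j a b • (τ a b n * evalMat M K E i j m) := by
  rcases m with _ | m
  · simp only [evalMat]
    split_ifs with e
    · subst e; simp [sgn1_diag]
    · simp
  · simp only [evalMat]
    have hp : ∀ r : ℕ, K ^ r * τ a b n =
        ((-1 : ℂ) ^ (r * (pa M a + pa M b))) • (τ a b n * K ^ r) := by
      intro r
      induction r with
      | zero => simp
      | succ r ih =>
        rw [pow_succ, mul_assoc, hK, mul_smul_comm, ← mul_assoc, ih, smul_mul_assoc, smul_smul,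
          ← pow_add, mul_assoc]
        ring_nf
    rw [mul_assoc, (hE i j m a b n).eq, ← mul_assoc, hp, smul_mul_assoc, mul_assoc]
    rfl

end evalMat

/-- `W ⊗ (ℂ ⊕ ∏_g ℂ)`: one more tensor factor with a basis consisting of a vacuum vector and one
vector for each generator `g`.  A vector `f` has vacuum component `f.1` and `g`-component
`f.2 g`. -/
abbrev Site (M N : ℕ) (W : Type) := W × (Gen M N → W)

section site
variable {M N : ℕ} {W : Type} [AddCommGroup W] [Module ℂ W]

/-- The action of operators on `W` on the first tensor factor of `Site M N W`. -/
noncomputable def liftOp (M N : ℕ) : Module.End ℂ W →ₐ[ℂ] Module.End ℂ (Site M N W) :=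
  AlgHom.ofLinearMap
    { toFun := fun A =>
        { toFun := fun f => (A f.1, fun h => A (f.2 h))
          map_add' := fun f g => by ext <;> simp
          map_smul' := fun c f => by ext <;> simp }
      map_add' := fun A B => by ext <;> simp
      map_smul' := fun c A => by ext <;> simp }
    (by ext <;> simp) (fun A B => by ext <;> simp)

@[simp] theorem liftOp_fst (A : Module.End ℂ W) (f : Site M N W) :
    (liftOp M N A f).1 = A f.1 := rfl
@[simp] theorem liftOp_snd (A : Module.End ℂ W) (f : Site M N W) (h : Gen M N) :
    (liftOp M N A f).2 h = A (f.2 h) := rfl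

/-- The operator `e_xj z^s` on the second factor of `Site M N W`.  The basis vector of index
`(a, d, m)` stands for `e_ad z^m`, on which `e_xj z^s` acts by left multiplication, and the vacuum
is sent to `e_xj z^s` itself; so the factor is a copy of the algebra `gl_k[z]` with a unit
adjoined. -/
noncomputable def siteE (M N : ℕ) {W : Type} [AddCommGroup W] [Module ℂ W]
    (x j : Fin (M + N)) (s : ℕ) : Module.End ℂ (Site M N W) where
  toFun f := (0, fun h => if x = h.1 then
    (if s ≤ h.2.2 then f.2 (j, h.2.1, h.2.2 - s) else 0) +
      (if j = h.2.1 ∧ h.2.2 = s then f.1 else 0) else 0)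
  map_add' f g := by
    ext h
    · simp
    · simp only [Prod.snd_add, Pi.add_apply, Prod.fst_add]
      split_ifs <;> abel
  map_smul' c f := by
    ext h
    · simp
    · simp only [Prod.smul_snd, Pi.smul_apply, Prod.smul_fst, RingHom.id_apply]
      split_ifs <;> simp

@[simp] theorem siteE_fst (x j : Fin (M + N)) (s : ℕ) (f : Site M N W) :
    (siteE M N x j s f).1 = 0 := rfl
theorem siteE_snd (x j : Fin (M + N)) (s : ℕ) (f : Site M N W) (h : Gen M N) :
    (siteE M N x j s f).2 h = if x = h.1 then
    (if s ≤ h.2.2 then f.2 (j, h.2.1, h.2.2 - s) else 0) +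
      (if j = h.2.1 ∧ h.2.2 = s then f.1 else 0) else 0 := rfl

theorem siteE_mul (x j : Fin (M + N)) (s : ℕ) (y l : Fin (M + N)) (r : ℕ) :
    (siteE M N x j s * siteE M N y l r : Module.End ℂ (Site M N W)) =
      if j = y then siteE M N x l (s + r) else 0 := by
  refine LinearMap.ext fun f => Prod.ext ?_ (funext fun h => ?_)
  · split_ifs <;> rfl
  · obtain ⟨a, d, m⟩ := h
    rw [Module.End.mul_apply, siteE_snd]
    simp only [siteE_snd, siteE_fst]
    by_cases e : j = y
    · subst e
      simp only [if_true, siteE_snd, ite_self, add_zero]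
      split_ifs <;> first | rfl | omega | simp [Nat.sub_sub]
    · simp [e, Ne.symm e]

theorem liftOp_siteE (A : Module.End ℂ W) (x j : Fin (M + N)) (s : ℕ) :
    Commute (liftOp M N A) (siteE M N x j s) := by
  refine LinearMap.ext fun f => Prod.ext ?_ (funext fun h => ?_)
  · simp
  · simp only [Module.End.mul_apply, liftOp_snd, siteE_snd, liftOp_fst]
    split_ifs <;> simp

/-- The parity operator of the tensor product: `κ` times the parity of the second factor. -/
noncomputable def siteK (M N : ℕ) {W : Type} [AddCommGroup W] [Module ℂ W] (κ : Module.End ℂ W) :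
    Module.End ℂ (Site M N W) where
  toFun f := (κ f.1, fun h => ((-1 : ℂ) ^ (pa M h.1 + pa M h.2.1)) • κ (f.2 h))
  map_add' f g := by ext <;> simp
  map_smul' c f := by
    ext
    · simp
    · simp [smul_comm c]

@[simp] theorem siteK_fst (κ : Module.End ℂ W) (f : Site M N W) : (siteK M N κ f).1 = κ f.1 := rfl
@[simp] theorem siteK_snd (κ : Module.End ℂ W) (f : Site M N W) (h : Gen M N) :
    (siteK M N κ f).2 h = ((-1 : ℂ) ^ (pa M h.1 + pa M h.2.1)) • κ (f.2 h) := rfl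

theorem siteK_sq {κ : Module.End ℂ W} (hκ : κ * κ = 1) : siteK M N κ * siteK M N κ = 1 := by
  have hk : ∀ w, κ (κ w) = w := fun w => by rw [← Module.End.mul_apply, hκ]; rfl
  refine LinearMap.ext fun f => Prod.ext ?_ (funext fun h => ?_)
  · simp [hk]
  · simp [hk, smul_smul, neg_one_pow_add_self]

theorem siteK_liftOp {κ A : Module.End ℂ W} {c : ℂ} (h : κ * A = c • (A * κ)) :
    siteK M N κ * liftOp M N A = c • (liftOp M N A * siteK M N κ) := by
  have hk : ∀ w, κ (A w) = c • A (κ w) := fun w => by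
    rw [← Module.End.mul_apply, h]; rfl
  refine LinearMap.ext fun f => Prod.ext ?_ (funext fun g => ?_)
  · simp [hk]
  · simp [hk, smul_comm c]

theorem siteK_siteE (κ : Module.End ℂ W) (x j : Fin (M + N)) (s : ℕ) :
    siteK M N κ * siteE M N x j s =
      ((-1 : ℂ) ^ (pa M x + pa M j)) • (siteE M N x j s * siteK M N κ) := by
  refine LinearMap.ext fun f => Prod.ext ?_ (funext fun h => ?_)
  · simp
  · obtain ⟨a, d, m⟩ := h
    have e1 : ((-1 : ℂ) ^ (pa M x + pa M j)) * (-1) ^ (pa M j + pa M d) =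
        (-1) ^ (pa M x + pa M d) := by
      rw [pow_add, pow_add, pow_add, mul_assoc, ← mul_assoc ((-1) ^ pa M j),
        neg_one_pow_add_self, one_mul]
    simp only [Module.End.mul_apply, siteK_snd, siteE_snd, siteK_fst, LinearMap.smul_apply,
      Prod.smul_snd, Pi.smul_apply]
    by_cases hx : x = a
    · subst hx
      simp only [if_true, map_add, smul_add]
      congr 1
      · split_ifs
        · rw [smul_smul, e1]
        · simp
      · split_ifs with h
        · rw [h.1]
        · simp
    · simp [hx]

end site

/-! ### Words acting on tensor products of evaluation representations -/

/-- The product `tmul` with an evaluation solution, separated according to whether mode `0` is used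
on the right. -/
theorem tmul_evalMat {M : ℕ} {k : ℕ} {A : Type*} [Ring A] [Algebra ℂ A] {K : A}
    {E : Fin k → Fin k → ℕ → A} (τ : Fin k → Fin k → ℕ → A) (i j : Fin k) (n : ℕ) :
    tmul M τ (evalMat M K E) i j n = τ i j n + ∑ x, ((-1 : ℂ) ^ pa M x) •
      ∑ r ∈ Finset.range n, τ i x r * (K ^ (pa M x + pa M j) * E x j (n - 1 - r)) := by
  have h1 : ∀ x, ∑ p ∈ Finset.HasAntidiagonal.antidiagonal n,
      τ i x p.1 * evalMat M K E x j p.2 =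
      ∑ r ∈ Finset.range n, τ i x r * (K ^ (pa M x + pa M j) * E x j (n - 1 - r)) +
        τ i x n * evalMat M K E x j 0 := by
    intro x
    rw [Finset.Nat.sum_antidiagonal_eq_sum_range_succ_mk, Finset.sum_range_succ, Nat.sub_self]
    congr 1
    refine Finset.sum_congr rfl fun r hr => ?_
    have : n - r = (n - 1 - r) + 1 := by
      have := Finset.mem_range.1 hr
      omega
    simp only [this, evalMat]
  unfold tmul
  simp only [h1, smul_add, Finset.sum_add_distrib]
  rw [add_comm]
  congr 1
  rw [Finset.sum_eq_single j]
  · simp [evalMat, smul_smul, neg_one_pow_add_self]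
  · intro x _ hx
    simp [evalMat, hx]
  · simp

/-- The degree of a word: `t^a_b[n]` has degree `n`. -/
def wdeg {M N : ℕ} (v : List (Gen M N)) : ℕ := (v.map fun g => g.2.2 + 1).sum

/-- A natural number whose residue modulo `2` is the parity of a word. -/
def wpar {M N : ℕ} (v : List (Gen M N)) : ℕ := (v.map fun g => pa M g.1 + pa M g.2.1).sum

section words
variable {M N : ℕ}
@[simp] theorem wdeg_nil : wdeg ([] : List (Gen M N)) = 0 := rfl
@[simp] theorem wdeg_cons (g : Gen M N) (v : List (Gen M N)) :
    wdeg (g :: v) = g.2.2 + 1 + wdeg v := by simp [wdeg]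
@[simp] theorem wdeg_append (u v : List (Gen M N)) : wdeg (u ++ v) = wdeg u + wdeg v := by
  simp [wdeg]
@[simp] theorem wpar_nil : wpar ([] : List (Gen M N)) = 0 := rfl
@[simp] theorem wpar_cons (g : Gen M N) (v : List (Gen M N)) :
    wpar (g :: v) = pa M g.1 + pa M g.2.1 + wpar v := by simp [wpar]

theorem neg_one_pow_mod_mul (x y : ℕ) : (-1 : ℂ) ^ ((x % 2) * (y % 2)) = (-1) ^ (x * y) := by
  rw [neg_one_pow_eq_pow_mod_two (n := x % 2 * (y % 2)), neg_one_pow_eq_pow_mod_two (n := x * y),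
    ← Nat.mul_mod]

theorem Xg_comm (g g' : Gen M N) : Xg M N g * Xg M N g' =
    ((-1 : ℂ) ^ ((pa M g.1 + pa M g.2.1) * (pa M g'.1 + pa M g'.2.1))) •
      (Xg M N g' * Xg M N g) := by
  have := RingQuot.mkAlgHom_rel ℂ (GRel.comm g g')
  rw [map_mul, map_smul, map_mul, neg_one_pow_mod_mul] at this
  exact this

/-- The monomial of `G[X]` attached to a word. -/
noncomputable def Xw (v : List (Gen M N)) : GX M N := (v.map (Xg M N)).prod

@[simp] theorem Xw_nil : Xw ([] : List (Gen M N)) = 1 := rfl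
@[simp] theorem Xw_cons (g : Gen M N) (v : List (Gen M N)) : Xw (g :: v) = Xg M N g * Xw v := by
  simp [Xw]
@[simp] theorem Xw_append (u v : List (Gen M N)) : Xw (u ++ v) = Xw u * Xw v := by
  simp [Xw]

theorem Xg_Xw (g : Gen M N) (v : List (Gen M N)) : Xg M N g * Xw v =
    ((-1 : ℂ) ^ ((pa M g.1 + pa M g.2.1) * wpar v)) • (Xw v * Xg M N g) := by
  induction v with
  | nil => simp
  | cons g' v ih =>
    rw [Xw_cons, ← mul_assoc, Xg_comm, smul_mul_assoc, mul_assoc, ih, mul_smul_comm, smul_smul,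
      ← pow_add, wpar_cons, ← mul_add, mul_assoc]
end words

/-- A representation of the super Yangian on `W`, given by a solution `τ` of the RTT relation,
together with a parity operator `κ` and an even vacuum vector `Ω`. -/
structure Vac (M N : ℕ) (W : Type) [AddCommGroup W] [Module ℂ W] where
  τ : Fin (M + N) → Fin (M + N) → ℕ → Module.End ℂ W
  isT : IsTMat M τ
  κ : Module.End ℂ W
  κκ : κ * κ = 1
  κτ : ∀ i j n, κ * τ i j n = ((-1 : ℂ) ^ (pa M i + pa M j)) • (τ i j n * κ)
  Ω : W
  κΩ : κ Ω = Ω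

namespace Vac
variable {M N : ℕ} {W : Type} [AddCommGroup W] [Module ℂ W] (D : Vac M N W)

/-- The operator by which the generator `g` acts. -/
noncomputable def op (g : Gen M N) : Module.End ℂ W := D.τ g.1 g.2.1 (g.2.2 + 1)

/-- The word `v` in the generators, applied to the vacuum. -/
noncomputable def tw (v : List (Gen M N)) : W := (v.map D.op).prod D.Ω

@[simp] theorem tw_nil : D.tw [] = D.Ω := rfl
@[simp] theorem tw_cons (g : Gen M N) (v : List (Gen M N)) : D.tw (g :: v) = D.op g (D.tw v) := by
  simp [tw]
theorem tw_append (u v : List (Gen M N)) : D.tw (u ++ v) = (u.map D.op).prod (D.tw v) := by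
  simp [tw]

theorem κ_op (g : Gen M N) (w : W) :
    D.κ (D.op g w) = ((-1 : ℂ) ^ (pa M g.1 + pa M g.2.1)) • D.op g (D.κ w) := by
  rw [← Module.End.mul_apply, op, D.κτ]; rfl

theorem κ_tw (v : List (Gen M N)) : D.κ (D.tw v) = ((-1 : ℂ) ^ wpar v) • D.tw v := by
  induction v with
  | nil => simp [D.κΩ]
  | cons g v ih => rw [tw_cons, κ_op, ih, map_smul, smul_smul, wpar_cons, pow_add _ _ (wpar v)]

theorem κ_pow_tw (r : ℕ) (v : List (Gen M N)) :
    (D.κ ^ r) (D.tw v) = ((-1 : ℂ) ^ (r * wpar v)) • D.tw v := by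
  induction r with
  | zero => simp
  | succ r ih =>
    rw [pow_succ', Module.End.mul_apply, ih, map_smul, κ_tw, smul_smul, ← pow_add, add_mul, one_mul]

/-- The tensor product of a representation with the evaluation representation on one more
factor. -/
noncomputable def next : Vac M N (Site M N W) where
  τ := tmul M (fun i j n => liftOp M N (D.τ i j n)) (evalMat M (liftOp M N D.κ) (siteE M N))
  isT := by
    refine IsTMat.mul M ⟨fun i j => ?_, fun i j a b m n => ?_⟩ (isTMat_evalMat ?_ ?_ ?_) ?_
    · rw [D.isT.zero]; split_ifs <;> simp
    · simp only [← map_mul, ← map_smul, ← map_sub, D.isT.rel]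
    · rw [← map_mul, D.κκ, map_one]
    · intro x j s; exact liftOp_siteE _ x j s
    · intro x j s y l r; exact siteE_mul x j s y l r
    · refine evalMat_comm ?_ ?_
      · intro i j n
        rw [← map_mul, D.κτ, map_smul, map_mul]
      · intro x j s a b n
        exact (liftOp_siteE _ x j s).symm
  κ := siteK M N D.κ
  κκ := siteK_sq D.κκ
  κτ i j n := by
    rw [tmul_evalMat, mul_add, add_mul, smul_add, siteK_liftOp (D.κτ i j n), Finset.mul_sum,
      Finset.sum_mul, Finset.smul_sum]
    congr 1
    refine Finset.sum_congr rfl fun x _ => ?_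
    rw [mul_smul_comm, smul_mul_assoc, smul_comm _ ((-1 : ℂ) ^ pa M x), Finset.mul_sum,
      Finset.sum_mul]
    congr 1
    rw [Finset.smul_sum]
    refine Finset.sum_congr rfl fun r _ => ?_
    have hK : Commute (siteK M N D.κ) (liftOp M N D.κ) := by
      have := siteK_liftOp (M := M) (N := N) (κ := D.κ) (A := D.κ) (c := 1) (by simp)
      rwa [one_smul] at this
    rw [← mul_assoc, siteK_liftOp (D.κτ i x r), smul_mul_assoc, mul_assoc,
      ← mul_assoc _ (liftOp M N D.κ ^ _), (hK.pow_right _).eq, mul_assoc _ (siteK M N D.κ),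
      siteK_siteE, mul_smul_comm, mul_smul_comm, smul_smul, ← mul_assoc, ← mul_assoc, ← mul_assoc]
    congr 1
    rw [pow_add, pow_add, pow_add, mul_assoc, ← mul_assoc ((-1) ^ pa M x),
        neg_one_pow_add_self, one_mul]
  Ω := (D.Ω, 0)
  κΩ := by
    refine Prod.ext ?_ (funext fun h => ?_)
    · simp [D.κΩ]
    · simp

theorem next_fst (i j : Fin (M + N)) (n : ℕ) (f : Site M N W) :
    (D.next.τ i j n f).1 = D.τ i j n f.1 := by
  simp only [next]
  rw [tmul_evalMat]
  simp only [LinearMap.add_apply, LinearMap.sum_apply, LinearMap.smul_apply, Prod.fst_add,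
    Prod.fst_sum, Prod.smul_fst, Module.End.mul_apply, liftOp_fst, ← map_pow, siteE_fst, map_zero]
  simp

theorem next_snd (i j : Fin (M + N)) (n : ℕ) (f : Site M N W) (h : Gen M N) :
    (D.next.τ i j n f).2 h = D.τ i j n (f.2 h) + ((-1 : ℂ) ^ pa M h.1) •
      ∑ r ∈ Finset.range n, D.τ i h.1 r ((D.κ ^ (pa M h.1 + pa M j))
        ((if n - 1 - r ≤ h.2.2 then f.2 (j, h.2.1, h.2.2 - (n - 1 - r)) else 0) +
          (if j = h.2.1 ∧ h.2.2 = n - 1 - r then f.1 else 0))) := by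
  simp only [next]
  rw [tmul_evalMat]
  simp only [LinearMap.add_apply, LinearMap.sum_apply, LinearMap.smul_apply, Prod.snd_add,
    Prod.snd_sum, Prod.smul_snd, Module.End.mul_apply, liftOp_snd, ← map_pow, siteE_snd,
    Pi.add_apply, Finset.sum_apply, Pi.smul_apply]
  congr 1
  rw [Finset.sum_eq_single h.1]
  · simp
  · intro x _ hx
    simp [hx]
  · simp

theorem next_tw_fst (v : List (Gen M N)) : (D.next.tw v).1 = D.tw v := by
  induction v with
  | nil => rfl
  | cons g v ih => rw [tw_cons, tw_cons, op, next_fst, ih, op]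

/-- The span of the vectors obtained by applying to the vacuum the words satisfying `P`. -/
noncomputable def Sp (P : List (Gen M N) → Prop) : Submodule ℂ W :=
  Submodule.span ℂ (D.tw '' {u | P u})

variable {D}

theorem tw_mem {P : List (Gen M N) → Prop} {u : List (Gen M N)} (h : P u) : D.tw u ∈ D.Sp P :=
  Submodule.subset_span ⟨u, h, rfl⟩

theorem Sp_map {P : List (Gen M N) → Prop} {V : Type*} [AddCommGroup V] [Module ℂ V]
    (A : W →ₗ[ℂ] V) (S : Submodule ℂ V) (h : ∀ u, P u → A (D.tw u) ∈ S) {w : W} (hw : w ∈ D.Sp P) :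
    A w ∈ S := by
  have : D.Sp P ≤ S.comap A := by
    rw [Sp, Submodule.span_le]
    rintro _ ⟨u, hu, rfl⟩
    exact h u hu
  exact this hw

theorem Sp_mono {P Q : List (Gen M N) → Prop} (h : ∀ u, P u → Q u) {w : W} (hw : w ∈ D.Sp P) :
    w ∈ D.Sp Q :=
  Submodule.span_mono (Set.image_mono h) hw

theorem κ_pow_mem {P : List (Gen M N) → Prop} (r : ℕ) {w : W} (hw : w ∈ D.Sp P) :
    (D.κ ^ r) w ∈ D.Sp P := by
  refine Sp_map (D.κ ^ r) (D.Sp P) (fun u hu => ?_) hw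
  rw [κ_pow_tw]
  exact Submodule.smul_mem _ _ (tw_mem hu)

theorem τ_mem {P Q : List (Gen M N) → Prop} (i j : Fin (M + N)) (n : ℕ)
    (h0 : n = 0 → ∀ u, P u → Q u) (h1 : ∀ m, n = m + 1 → ∀ u, P u → Q ((i, j, m) :: u))
    {w : W} (hw : w ∈ D.Sp P) : D.τ i j n w ∈ D.Sp Q := by
  refine Sp_map _ (D.Sp Q) (fun u hu => ?_) hw
  rcases n with _ | n
  · rw [D.isT.zero]
    split_ifs
    · exact Submodule.smul_mem _ _ (tw_mem (h0 rfl u hu))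
    · exact Submodule.zero_mem _
  · exact D.tw_cons (i, j, n) u ▸ tw_mem (h1 n rfl u hu)

variable (D)

/-- The leading part of the `h`-component of a word applied to the vacuum of `D.next`: the sum over
the letters equal to `h` of the word with this letter removed, the removal being accompanied by
the Koszul sign (the power of `κ`). -/
noncomputable def main (h : Gen M N) : List (Gen M N) → W
  | [] => 0
  | g :: v => D.op g (main h v) +
      if g = h then (D.κ ^ (pa M g.1 + pa M g.2.1)) (D.tw v) else 0

theorem main_mem (h : Gen M N) (v : List (Gen M N)) : D.main h v ∈
    D.Sp fun u => wdeg u + (h.2.2 + 1) = wdeg v ∧ u.length + 1 = v.length := by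
  induction v with
  | nil => exact Submodule.zero_mem _
  | cons g v ih =>
    refine Submodule.add_mem _ (τ_mem _ _ _ (by simp) ?_ ih) ?_
    · rintro m hm u ⟨h1, h2⟩
      constructor
      · simp only [wdeg_cons]; omega
      · simp only [List.length_cons]; omega
    · split_ifs with e
      · subst e
        refine κ_pow_mem _ (tw_mem ⟨?_, ?_⟩)
        · simp only [wdeg_cons]; omega
        · simp
      · exact Submodule.zero_mem _

/-- Up to the leading part, the `h`-component of a word of degree `p` and length `l` is a
combination of words of degree less than `p - deg h`, or of degree `p - deg h` and length at
least `l`, one more than the words of the leading part. -/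
theorem next_tw_snd (h : Gen M N) (v : List (Gen M N)) :
    (D.next.tw v).2 h - D.main h v ∈ D.Sp fun u => wdeg u + (h.2.2 + 1) < wdeg v ∨
      (wdeg u + (h.2.2 + 1) = wdeg v ∧ v.length ≤ u.length) := by
  induction v generalizing h with
  | nil =>
    have : (D.next.tw []).2 h - D.main h [] = 0 := by simp [next, main]
    rw [this]
    exact Submodule.zero_mem _
  | cons g v ih =>
    have ih' : ∀ h, (D.next.tw v).2 h ∈ D.Sp fun u => wdeg u + (h.2.2 + 1) ≤ wdeg v := by
      intro h
      rw [← sub_add_cancel ((D.next.tw v).2 h) (D.main h v)]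
      refine Submodule.add_mem _ (Sp_mono ?_ (ih h)) (Sp_mono ?_ (D.main_mem h v))
      · rintro u (h | h) <;> omega
      · rintro u h; omega
    obtain ⟨i, j, n⟩ := g
    rw [tw_cons, op, next_snd, next_tw_fst, main, op]
    have e1 : ∀ a b c d : W, a + b - (c + d) = (a - c) + (b - d) := fun a b c d => by abel
    rw [e1, ← map_sub]
    refine Submodule.add_mem _ (τ_mem _ _ _ (by simp) ?_ (ih h)) ?_
    · rintro m hm u hu
      simp only [wdeg_cons, List.length_cons]
      dsimp only at hm
      omega
    · dsimp only
      simp only [map_add]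
      rw [Finset.sum_add_distrib, smul_add, add_sub_assoc]
      refine Submodule.add_mem _ (Submodule.smul_mem _ _ (Submodule.sum_mem _ fun r hr => ?_)) ?_
      · have hr' := Finset.mem_range.1 hr
        split_ifs with hc
        · refine τ_mem _ _ _ ?_ ?_ (κ_pow_mem _ (ih' _))
          · intro h0 u hu
            simp only [wdeg_cons] at hu ⊢
            omega
          · intro m h0 u hu
            simp only [wdeg_cons] at hu ⊢
            omega
        · simp
      · rw [Finset.sum_range_succ', smul_add, add_sub_assoc]
        refine Submodule.add_mem _ (Submodule.smul_mem _ _ (Submodule.sum_mem _ fun r hr => ?_)) ?_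
        · have hr' := Finset.mem_range.1 hr
          split_ifs with hc
          · refine τ_mem (P := fun u => u = v) _ _ _ (by simp) ?_ (κ_pow_mem _ (tw_mem rfl))
            rintro m hm u rfl
            simp only [wdeg_cons, List.length_cons]
            omega
          · simp
        · convert Submodule.zero_mem _
          rw [D.isT.zero]
          obtain ⟨a, d, m⟩ := h
          by_cases hi : i = a
          · subst hi
            by_cases hj : j = d ∧ m = n
            · obtain ⟨rfl, rfl⟩ := hj
              simp [smul_smul, neg_one_pow_add_self]
            · have : ¬ ((i, j, n) = (i, d, m)) := by
                simp only [Prod.mk.injEq, not_and, true_and] at hj ⊢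
                exact fun h1 h2 => hj h1 h2.symm
              simp [hj, this]
          · simp [hi]

end Vac

/-! ### Functionals detecting leading terms -/

/-- The functionals `ω p` detect the leading terms of words of length `l`: applied to words of
degree at most `p` acting on the vacuum, `ω p` vanishes in degree less than `p` and in length
greater than `l`, and is `l!` times the monomial of `G[X]` in degree `p` and length `l`.  Nothing is
required for words of degree `p` and length less than `l`. -/
structure Sep {M N : ℕ} {W : Type} [AddCommGroup W] [Module ℂ W] (D : Vac M N W) (l : ℕ)
    (ω : ℕ → W →ₗ[ℂ] GX M N) : Prop where
  lt : ∀ p v, wdeg v < p → ω p (D.tw v) = 0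
  long : ∀ p v, wdeg v = p → l < v.length → ω p (D.tw v) = 0
  eq : ∀ p v, wdeg v = p → v.length = l → ω p (D.tw v) = (l.factorial : ℂ) • Xw v

/-- The finite set of generators of degree at most `p`. -/
def gens (M N p : ℕ) : Finset (Gen M N) :=
  (Finset.univ : Finset (Fin (M + N))) ×ˢ (Finset.univ : Finset (Fin (M + N))) ×ˢ Finset.range p

theorem mem_gens {M N p : ℕ} (h : Gen M N) : h ∈ gens M N p ↔ h.2.2 < p := by
  simp [gens]

/-- The functionals for one more tensor factor: the sum over the generators `h` of the functional
on the `h`-component, multiplied by the variable of `h`. -/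
noncomputable def nextFun {M N : ℕ} {W : Type} [AddCommGroup W] [Module ℂ W]
    (ω : ℕ → W →ₗ[ℂ] GX M N) (p : ℕ) : Site M N W →ₗ[ℂ] GX M N :=
  ∑ h ∈ gens M N p, LinearMap.mulRight ℂ (Xg M N h) ∘ₗ ω (p - (h.2.2 + 1)) ∘ₗ
    LinearMap.proj h ∘ₗ LinearMap.snd ℂ W (Gen M N → W)

theorem nextFun_apply {M N : ℕ} {W : Type} [AddCommGroup W] [Module ℂ W]
    (ω : ℕ → W →ₗ[ℂ] GX M N) (p : ℕ) (f : Site M N W) :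
    nextFun ω p f = ∑ h ∈ gens M N p, ω (p - (h.2.2 + 1)) (f.2 h) * Xg M N h := by
  simp [nextFun]

namespace Sep
variable {M N : ℕ} {W : Type} [AddCommGroup W] [Module ℂ W] {D : Vac M N W} {l : ℕ}
    {ω : ℕ → W →ₗ[ℂ] GX M N}

/-- Summing over the removed letter, each of the letters of `v` contributes the full monomial: the
Koszul sign in `Vac.main` is the one that moves the removed letter to the right end. -/
theorem main_sum (S : Sep D l ω) (p : ℕ) (v u : List (Gen M N)) (hd : wdeg (u ++ v) = p)
    (hl : (u ++ v).length = l + 1) :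
    ∑ h ∈ gens M N p, ω (p - (h.2.2 + 1)) ((u.map D.op).prod (D.main h v)) * Xg M N h =
      ((l.factorial : ℂ) * v.length) • Xw (u ++ v) := by
  induction v generalizing u with
  | nil => simp [Vac.main]
  | cons g v ih =>
    have hg : g ∈ gens M N p := by
      rw [mem_gens]; simp only [wdeg_append, wdeg_cons] at hd; omega
    have ih' := ih (u ++ [g]) (by simpa using hd) (by simpa using hl)
    simp only [List.map_append, List.prod_append, List.map_cons, List.map_nil, List.prod_cons,
      List.prod_nil, mul_one, Module.End.mul_apply, List.append_assoc, List.cons_append,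
      List.nil_append] at ih'
    simp only [Vac.main, map_add, add_mul, Finset.sum_add_distrib, ih']
    rw [Finset.sum_eq_single_of_mem g hg]
    · rw [if_pos rfl, Vac.κ_pow_tw, map_smul, ← Vac.tw_append, map_smul,
        S.eq _ (u ++ v) ?_ ?_, Xw_append, Xw_append, Xw_cons, Xg_Xw]
      · simp only [smul_mul_assoc, mul_smul_comm, smul_smul, mul_assoc]
        rw [← add_smul]
        congr 1
        push_cast [List.length_cons]
        ring
      · simp only [wdeg_append, wdeg_cons] at hd ⊢; omega
      · simp only [List.length_append, List.length_cons] at hl ⊢; omega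
    · intro h _ hne
      rw [if_neg hne.symm]
      simp

theorem kill (S : Sep D l ω) {P : List (Gen M N) → Prop} (p : ℕ)
    (h : ∀ u, P u → wdeg u < p ∨ (wdeg u = p ∧ l < u.length)) {w : W} (hw : w ∈ D.Sp P) :
    ω p w = 0 := by
  have := Vac.Sp_map (ω p) ⊥ (fun u hu => ?_) hw
  · simpa using this
  · rw [Submodule.mem_bot]
    rcases h u hu with h | h
    · exact S.lt p u h
    · exact S.long p u h.1 h.2

theorem next (S : Sep D l ω) : Sep D.next (l + 1) (nextFun ω) where
  lt p v hv := by
    rw [nextFun_apply]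
    refine Finset.sum_eq_zero fun h hh => ?_
    rw [mem_gens] at hh
    rw [← sub_add_cancel ((D.next.tw v).2 h) (D.main h v), map_add,
      S.kill _ ?_ (D.next_tw_snd h v), S.kill _ ?_ (D.main_mem h v), add_zero, zero_mul]
    · intro u hu; omega
    · intro u hu; omega
  long p v hv hl := by
    rw [nextFun_apply]
    refine Finset.sum_eq_zero fun h hh => ?_
    rw [mem_gens] at hh
    rw [← sub_add_cancel ((D.next.tw v).2 h) (D.main h v), map_add,
      S.kill _ ?_ (D.next_tw_snd h v), S.kill _ ?_ (D.main_mem h v), add_zero, zero_mul]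
    · intro u hu; omega
    · intro u hu; omega
  eq p v hv hl := by
    rw [nextFun_apply]
    have e := S.main_sum p v [] hv hl
    simp only [List.map_nil, List.prod_nil, Module.End.one_apply, List.nil_append] at e
    rw [hl] at e
    rw [Nat.factorial_succ, mul_comm, Nat.cast_mul, ← e]
    refine Finset.sum_congr rfl fun h hh => ?_
    rw [mem_gens] at hh
    rw [← sub_add_cancel ((D.next.tw v).2 h) (D.main h v), map_add,
      S.kill _ ?_ (D.next_tw_snd h v), zero_add]
    intro u hu; omega

end Sep

/-- The one-dimensional representation in which all generators act by zero. -/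
noncomputable def vacBase (M N : ℕ) : Vac M N ℂ where
  τ i j n := if n = 0 then (if i = j then ((-1 : ℂ) ^ pa M j) • 1 else 0) else 0
  isT := by
    have h0 : ∀ i j : Fin (M + N), (fun i j (n : ℕ) => if n = 0 then
        (if i = j then ((-1 : ℂ) ^ pa M j) • (1 : Module.End ℂ ℂ) else 0) else 0) i j 0 =
        if i = j then ((-1 : ℂ) ^ pa M j) • (1 : Module.End ℂ ℂ) else 0 := fun i j => rfl
    refine ⟨h0, fun i j a b m n => ?_⟩
    rcases m with _ | m <;> rcases n with _ | n <;> simp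
  κ := 1
  κκ := by simp
  κτ i j n := by
    by_cases h : n = 0
    · by_cases e : i = j
      · subst e
        rcases pa_cases M i with h' | h' <;> simp [h, h']
      · simp [e]
    · simp [h]
  Ω := 1
  κΩ := rfl

theorem sep_base (M N : ℕ) : Sep (vacBase M N) 0
    (fun p => if p = 0 then LinearMap.toSpanSingleton ℂ (GX M N) 1 else 0) where
  lt p v hv := by
    have : p ≠ 0 := by omega
    simp [this]
  long p v hv hl := by
    rcases v with _ | ⟨g, v⟩
    · simp at hl
    · have : p ≠ 0 := by rw [← hv]; simp
      simp [this]
  eq p v hv hl := by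
    obtain rfl := List.length_eq_zero_iff.1 hl
    simp only [wdeg_nil] at hv
    subst hv
    simp [vacBase]

/-- The tensor product of `l` evaluation factors separates words of length `l`. -/
theorem exists_sep (M N l : ℕ) : ∃ (W : Type) (_ : AddCommGroup W) (_ : Module ℂ W)
    (D : Vac M N W) (ω : ℕ → W →ₗ[ℂ] GX M N), Sep D l ω := by
  induction l with
  | zero => exact ⟨ℂ, _, _, _, _, sep_base M N⟩
  | succ l ih =>
    obtain ⟨W, _, _, D, ω, S⟩ := ih
    exact ⟨Site M N W, _, _, _, _, S.next⟩

/-- The product in `Y(gl(M|N))` of the generators of a word. -/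
noncomputable def tgw {M N : ℕ} (v : List (Gen M N)) : Y M N := (v.map (tg M N)).prod

/-- The action of the super Yangian on `W`. -/
noncomputable def Vac.act {M N : ℕ} {W : Type} [AddCommGroup W] [Module ℂ W] (D : Vac M N W) :
    Y M N →ₐ[ℂ] Module.End ℂ W :=
  RingQuot.liftAlgHom ℂ ⟨FreeAlgebra.lift ℂ D.op, by
    intro x y hxy
    obtain ⟨a1, b1, a2, b2, m, n, hm, hn⟩ := hxy
    have hT : ∀ a b n, 1 ≤ n → FreeAlgebra.lift ℂ D.op (T M N a b n) = D.τ a b n := by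
      intro a b n hn
      rw [T, FreeAlgebra.lift_ι_apply, Vac.op]
      simp only [Nat.sub_add_cancel hn]
    simp only [map_sub, map_add, map_mul, map_smul, map_sum, apply_ite (FreeAlgebra.lift ℂ D.op),
      map_zero, hT _ _ m hm, hT _ _ n hn, hT _ _ (m + n - 1) (by omega)]
    rw [D.isT.min_form M a1 b1 a2 b2 m n hm hn]
    congr 2
    refine Finset.sum_congr rfl fun r hr => ?_
    rw [Finset.mem_Ico] at hr
    rw [hT _ _ r hr.1, hT _ _ r hr.1, hT _ _ (m + n - 1 - r) (by omega),
      hT _ _ (m + n - 1 - r) (by omega)]⟩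

theorem Vac.act_tgw {M N : ℕ} {W : Type} [AddCommGroup W] [Module ℂ W] (D : Vac M N W)
    (v : List (Gen M N)) : D.act (tgw v) D.Ω = D.tw v := by
  rw [tgw, map_list_prod, List.map_map, Vac.tw]
  congr 3
  funext g
  simp [Vac.act, tg]

theorem exists_functional (M N l p : ℕ) : ∃ φ : Y M N →ₗ[ℂ] GX M N,
    (∀ v, wdeg v < p → φ (tgw v) = 0) ∧ (∀ v, wdeg v = p → l < v.length → φ (tgw v) = 0) ∧
      (∀ v, wdeg v = p → v.length = l → φ (tgw v) = (l.factorial : ℂ) • Xw v) := by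
  obtain ⟨W, _, _, D, ω, S⟩ := exists_sep M N l
  have h : ∀ v, (ω p ∘ₗ LinearMap.applyₗ D.Ω ∘ₗ D.act.toLinearMap) (tgw v) = ω p (D.tw v) := by
    intro v
    rw [← D.act_tgw v]; rfl
  refine ⟨ω p ∘ₗ LinearMap.applyₗ D.Ω ∘ₗ D.act.toLinearMap, fun v hv => ?_, fun v hv hl => ?_,
    fun v hv hl => ?_⟩
  · rw [h, S.lt p v hv]
  · rw [h, S.long p v hv hl]
  · rw [h, S.eq p v hv hl]

/-! ### The associated graded algebra and `G[X]` -/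

theorem span_mul_mem {A : Type*} [Ring A] [Algebra ℂ A] {S T U : Set A}
    (h : ∀ s ∈ S, ∀ t ∈ T, s * t ∈ U) {x y : A} (hx : x ∈ Submodule.span ℂ S)
    (hy : y ∈ Submodule.span ℂ T) : x * y ∈ Submodule.span ℂ U := by
  have := Submodule.mul_mem_mul hx hy
  rw [Submodule.span_mul_span] at this
  exact Submodule.span_mono (Set.mul_subset_iff.2 h) this

theorem mem_of_two_mul {A : Type*} [Ring A] [Algebra ℂ A] {S : Submodule ℂ A} {z : A}
    (h : z - (-1 : ℂ) • z ∈ S) : z ∈ S := by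
  rw [neg_one_smul ℂ, sub_neg_eq_add, ← two_smul ℂ z] at h
  exact (Submodule.smul_mem_iff _ two_ne_zero).1 h

section filt
variable {M N : ℕ}

@[simp] theorem tgw_nil : tgw ([] : List (Gen M N)) = 1 := rfl
@[simp] theorem tgw_cons (g : Gen M N) (v : List (Gen M N)) : tgw (g :: v) = tg M N g * tgw v := by
  simp [tgw]
@[simp] theorem tgw_append (u v : List (Gen M N)) : tgw (u ++ v) = tgw u * tgw v := by
  simp [tgw]

theorem filt_eq (p : ℕ) : filt M N p = Submodule.span ℂ (tgw '' {v | wdeg v ≤ p}) := by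
  rw [filt]
  congr 1
  ext x
  constructor
  · rintro ⟨l, h, rfl⟩; exact ⟨l, h, rfl⟩
  · rintro ⟨l, h, rfl⟩; exact ⟨l, h, rfl⟩

theorem filtPred_eq (p : ℕ) : filtPred M N p = Submodule.span ℂ (tgw '' {v | wdeg v < p}) := by
  rcases p with _ | p
  · simp [filtPred]
  · rw [filtPred, filt_eq]
    simp only [Nat.lt_succ_iff]

theorem gpiece_eq (p : ℕ) : gpiece M N p = Submodule.span ℂ (Xw '' {v | wdeg v = p}) := by
  rw [gpiece]
  congr 1
  ext x
  constructor
  · rintro ⟨l, h, rfl⟩; exact ⟨l, h, rfl⟩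
  · rintro ⟨l, h, rfl⟩; exact ⟨l, h, rfl⟩

theorem filtPred_le (p : ℕ) : filtPred M N p ≤ filt M N p := by
  rw [filtPred_eq, filt_eq]
  exact Submodule.span_mono (Set.image_mono fun v (hv : wdeg v < p) => le_of_lt hv)

theorem filt_mul {p q : ℕ} {x y : Y M N} (hx : x ∈ filt M N p) (hy : y ∈ filt M N q) :
    x * y ∈ filt M N (p + q) := by
  rw [filt_eq] at *
  refine span_mul_mem ?_ hx hy
  rintro _ ⟨u, hu, rfl⟩ _ ⟨v, hv, rfl⟩
  refine ⟨u ++ v, ?_, tgw_append u v⟩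
  simp only [Set.mem_ofPred_eq, wdeg_append] at *
  omega

theorem filtPred_mul {p q : ℕ} {x y : Y M N} (hx : x ∈ filtPred M N p) (hy : y ∈ filt M N q) :
    x * y ∈ filtPred M N (p + q) := by
  rw [filtPred_eq] at *
  rw [filt_eq] at hy
  refine span_mul_mem ?_ hx hy
  rintro _ ⟨u, hu, rfl⟩ _ ⟨v, hv, rfl⟩
  refine ⟨u ++ v, ?_, tgw_append u v⟩
  simp only [Set.mem_ofPred_eq, wdeg_append] at *
  omega

theorem mul_filtPred {p q : ℕ} {x y : Y M N} (hx : x ∈ filt M N p) (hy : y ∈ filtPred M N q) :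
    x * y ∈ filtPred M N (p + q) := by
  rw [filtPred_eq] at *
  rw [filt_eq] at hx
  refine span_mul_mem ?_ hx hy
  rintro _ ⟨u, hu, rfl⟩ _ ⟨v, hv, rfl⟩
  refine ⟨u ++ v, ?_, tgw_append u v⟩
  simp only [Set.mem_ofPred_eq, wdeg_append] at *
  omega

theorem tgw_mem_filt {v : List (Gen M N)} {p : ℕ} (h : wdeg v ≤ p) : tgw v ∈ filt M N p := by
  rw [filt_eq]; exact Submodule.subset_span ⟨v, h, rfl⟩

theorem tgw_mem_filtPred {v : List (Gen M N)} {p : ℕ} (h : wdeg v < p) :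
    tgw v ∈ filtPred M N p := by
  rw [filtPred_eq]; exact Submodule.subset_span ⟨v, h, rfl⟩

theorem tg_mem_filt (g : Gen M N) : tg M N g ∈ filt M N (g.2.2 + 1) := by
  have := tgw_mem_filt (v := [g]) (p := g.2.2 + 1) (by simp)
  simpa using this

theorem t_eq_tg (a b : Fin (M + N)) (n : ℕ) : t M N a b n = tg M N (a, b, n - 1) := rfl

theorem t_mem_filtPred (a b : Fin (M + N)) {n p : ℕ} (hn : 1 ≤ n) (h : n < p) :
    t M N a b n ∈ filtPred M N p := by
  have := tgw_mem_filtPred (v := [((a, b, n - 1) : Gen M N)]) (p := p) (by simp; omega)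
  simpa [t_eq_tg] using this

theorem tt_mem_filtPred (a b c d : Fin (M + N)) {m n p : ℕ} (hm : 1 ≤ m) (hn : 1 ≤ n)
    (h : m + n < p) : t M N a b m * t M N c d n ∈ filtPred M N p := by
  have := tgw_mem_filtPred (v := [((a, b, m - 1) : Gen M N), (c, d, n - 1)]) (p := p)
    (by simp; omega)
  simpa [t_eq_tg] using this

/-- The symbols of the generators supercommute: all terms on the right-hand side of the defining
relation have lower degree. -/
theorem supercomm_mem (g g' : Gen M N) :
    tg M N g * tg M N g' - ((-1 : ℂ) ^ ((pa M g.1 + pa M g.2.1) * (pa M g'.1 + pa M g'.2.1))) •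
      (tg M N g' * tg M N g) ∈ filtPred M N (g.2.2 + 1 + (g'.2.2 + 1)) := by
  obtain ⟨a, b, m⟩ := g
  obtain ⟨c, d, n⟩ := g'
  have := RingQuot.mkAlgHom_rel ℂ (Rel.defining a b c d (m + 1) (n + 1) (by omega) (by omega))
  simp only [map_sub, map_add, map_mul, map_smul, map_sum,
    apply_ite (RingQuot.mkAlgHom ℂ (Rel M N)), map_zero] at this
  change t M N a b (m + 1) * t M N c d (n + 1) - sgn1 M a b c d • _ ∈ _
  refine (congrArg (· ∈ filtPred M N _) this).mpr ?_
  refine Submodule.add_mem _ (Submodule.sub_mem _ ?_ (Submodule.smul_mem _ _ ?_))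
    (Submodule.smul_mem _ _ (Submodule.sum_mem _ fun r hr => Submodule.sub_mem _ ?_ ?_))
  · split_ifs
    · exact t_mem_filtPred _ _ (by omega) (by dsimp only; omega)
    · exact Submodule.zero_mem _
  · split_ifs
    · exact t_mem_filtPred _ _ (by omega) (by dsimp only; omega)
    · exact Submodule.zero_mem _
  · rw [Finset.mem_Ico] at hr
    exact tt_mem_filtPred _ _ _ _ (by omega) (by omega) (by dsimp only; omega)
  · rw [Finset.mem_Ico] at hr
    exact tt_mem_filtPred _ _ _ _ (by omega) (by omega) (by dsimp only; omega)

theorem sq_mem (g : Gen M N) (h : oddG M N g) :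
    tg M N g * tg M N g ∈ filtPred M N (g.2.2 + 1 + (g.2.2 + 1)) := by
  have := supercomm_mem g g
  have hs : (-1 : ℂ) ^ ((pa M g.1 + pa M g.2.1) * (pa M g.1 + pa M g.2.1)) = -1 := by
    have : Odd (pa M g.1 + pa M g.2.1) := Nat.odd_iff.2 h
    exact (this.mul this).neg_one_pow
  rw [hs] at this
  exact mem_of_two_mul this

end filt

section free
variable {M N : ℕ}
open Polynomial

/-- The projection from the free algebra to the super Yangian. -/
noncomputable abbrev piY (M N : ℕ) : F M N →ₐ[ℂ] Y M N := RingQuot.mkAlgHom ℂ (Rel M N)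
/-- The projection from the free algebra to `G[X]`. -/
noncomputable abbrev piG (M N : ℕ) : F M N →ₐ[ℂ] GX M N := RingQuot.mkAlgHom ℂ (GRel M N)
/-- The word `v` as an element of the free algebra. -/
noncomputable def fw (v : List (Gen M N)) : F M N := (v.map (FreeAlgebra.ι ℂ)).prod

@[simp] theorem fw_nil : fw ([] : List (Gen M N)) = 1 := rfl
@[simp] theorem fw_cons (g : Gen M N) (v : List (Gen M N)) :
    fw (g :: v) = FreeAlgebra.ι ℂ g * fw v := by simp [fw]
@[simp] theorem fw_append (u v : List (Gen M N)) : fw (u ++ v) = fw u * fw v := by simp [fw]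

theorem piY_fw (v : List (Gen M N)) : piY M N (fw v) = tgw v := by
  rw [fw, map_list_prod, List.map_map]; rfl
theorem piG_fw (v : List (Gen M N)) : piG M N (fw v) = Xw v := by
  rw [fw, map_list_prod, List.map_map]; rfl

/-- The component of degree `p` of the free algebra. -/
noncomputable def homF (M N p : ℕ) : Submodule ℂ (F M N) :=
  Submodule.span ℂ (fw '' {v | wdeg v = p})

/-- The homomorphism from the free algebra to `Y[X]` sending a word `v` to `v X^(deg v)`; its image
lies in the Rees algebra of the filtration. -/
noncomputable def rees (M N : ℕ) : F M N →ₐ[ℂ] (Y M N)[X] :=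
  FreeAlgebra.lift ℂ fun g => monomial (g.2.2 + 1) (tg M N g)

theorem rees_fw (v : List (Gen M N)) : rees M N (fw v) = monomial (wdeg v) (tgw v) := by
  induction v with
  | nil => simp
  | cons g v ih =>
    rw [fw_cons, map_mul, ih, rees, FreeAlgebra.lift_ι_apply, monomial_mul_monomial, wdeg_cons,
      tgw_cons]

theorem fw_span_top : Submodule.span ℂ (Set.range (fw : List (Gen M N) → F M N)) = ⊤ := by
  rw [eq_top_iff]
  rintro f -
  have h1 : (1 : F M N) ∈ Submodule.span ℂ (Set.range (fw : List (Gen M N) → F M N)) :=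
    Submodule.subset_span ⟨[], rfl⟩
  induction f using FreeAlgebra.induction with
  | grade0 r =>
    rw [Algebra.algebraMap_eq_smul_one]
    exact Submodule.smul_mem _ _ h1
  | grade1 g => exact Submodule.subset_span ⟨[g], by simp⟩
  | mul a b ha hb =>
    refine span_mul_mem ?_ ha hb
    rintro _ ⟨u, rfl⟩ _ ⟨v, rfl⟩
    exact ⟨u ++ v, fw_append u v⟩
  | add a b ha hb => exact Submodule.add_mem _ ha hb

theorem fw_ind {f : F M N} {V : Type*} [AddCommGroup V] [Module ℂ V] (A : F M N →ₗ[ℂ] V)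
    (S : Submodule ℂ V) (h : ∀ v, A (fw v) ∈ S) : A f ∈ S := by
  have : Submodule.span ℂ (Set.range (fw : List (Gen M N) → F M N)) ≤ S.comap A := by
    rw [Submodule.span_le]
    rintro _ ⟨v, rfl⟩
    exact h v
  exact this (fw_span_top ▸ Submodule.mem_top)

theorem rees_mem (f : F M N) (i : ℕ) : (rees M N f).coeff i ∈ filt M N i := by
  refine fw_ind ((lcoeff (Y M N) i).restrictScalars ℂ ∘ₗ (rees M N).toLinearMap) _ fun v => ?_
  simp only [LinearMap.comp_apply, AlgHom.toLinearMap_apply, LinearMap.restrictScalars_apply,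
    lcoeff_apply, rees_fw, coeff_monomial]
  split_ifs with h
  · exact tgw_mem_filt h.le
  · exact Submodule.zero_mem _

/-- The congruence on the free algebra whose quotient is the associated graded algebra: `f` and
`g` are related if all their homogeneous components have the same symbols. -/
noncomputable def lowCon (M N : ℕ) : RingCon (F M N) where
  r f g := ∀ i, (rees M N (f - g)).coeff i ∈ filtPred M N i
  iseqv :=
    { refl := fun f i => by simp
      symm := fun {f g} h i => by
        rw [← neg_sub, map_neg, coeff_neg]
        exact Submodule.neg_mem _ (h i)
      trans := fun {f g k} h h' i => by
        rw [← sub_add_sub_cancel f g k, map_add, coeff_add]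
        exact Submodule.add_mem _ (h i) (h' i) }
  add' {f f' g g'} h h' i := by
    rw [add_sub_add_comm, map_add, coeff_add]
    exact Submodule.add_mem _ (h i) (h' i)
  mul' {f f' g g'} h h' i := by
    have e : f * g - f' * g' = (f - f') * g + f' * (g - g') := by noncomm_ring
    rw [e, map_add, map_mul, map_mul, coeff_add, coeff_mul, coeff_mul]
    refine Submodule.add_mem _ (Submodule.sum_mem _ fun x hx => ?_)
      (Submodule.sum_mem _ fun x hx => ?_)
    · rw [← Finset.HasAntidiagonal.mem_antidiagonal.1 hx]
      exact filtPred_mul (h _) (rees_mem _ _)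
    · rw [← Finset.HasAntidiagonal.mem_antidiagonal.1 hx]
      exact mul_filtPred (rees_mem _ _) (h' _)

theorem lowCon_of_grel {f g : F M N} (h : GRel M N f g) : lowCon M N f g := by
  intro i
  have hι : ∀ g : Gen M N, rees M N (FreeAlgebra.ι ℂ g) = monomial (g.2.2 + 1) (tg M N g) :=
    fun g => FreeAlgebra.lift_ι_apply _ _
  cases h with
  | comm g g' =>
    rw [neg_one_pow_mod_mul, map_sub, map_smul, map_mul, map_mul, hι, hι, monomial_mul_monomial,
      monomial_mul_monomial, smul_monomial, add_comm (g'.2.2 + 1), ← map_sub, coeff_monomial]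
    split_ifs with e
    · rw [← e]
      exact supercomm_mem g g'
    · exact Submodule.zero_mem _
  | sq g h =>
    rw [sub_zero, map_mul, hι, monomial_mul_monomial, coeff_monomial]
    split_ifs with e
    · rw [← e]
      exact sq_mem g h
    · exact Submodule.zero_mem _

theorem rees_homF {p : ℕ} {f : F M N} (hf : f ∈ homF M N p) :
    (rees M N f).coeff p = piY M N f := by
  have : homF M N p ≤ LinearMap.eqLocus
      ((lcoeff (Y M N) p).restrictScalars ℂ ∘ₗ (rees M N).toLinearMap) (piY M N).toLinearMap := by
    rw [homF, Submodule.span_le]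
    rintro _ ⟨v, rfl, rfl⟩
    simp [rees_fw, -fw_cons, piY_fw]
  exact this hf

/-- The map from `G[X]` to the associated graded algebra is well defined, because the relations of
`G[X]` hold modulo `lowCon`. -/
theorem piY_mem_of_piG {p : ℕ} {f : F M N} (hf : f ∈ homF M N p) (h : piG M N f = 0) :
    piY M N f ∈ filtPred M N p := by
  let q : GX M N →+* (lowCon M N).Quotient :=
    RingQuot.lift ⟨(lowCon M N).mk', fun x y hxy => (RingCon.eq _).2 (lowCon_of_grel hxy)⟩
  have hq : q (piG M N f) = (lowCon M N).mk' f := by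
    rw [piG, RingQuot.mkAlgHom]
    exact RingQuot.lift_mkRingHom_apply _ _ f
  rw [h, map_zero] at hq
  have h2 : lowCon M N f 0 := (RingCon.eq _).1 hq.symm
  have h3 := h2 p
  rwa [sub_zero, rees_homF hf] at h3

theorem homF_decomp {p : ℕ} {f : F M N} (hf : f ∈ homF M N p) : ∃ c : ℕ → F M N,
    (∀ l, c l ∈ Submodule.span ℂ (fw '' {v | wdeg v = p ∧ v.length = l})) ∧
      f = ∑ l ∈ Finset.range (p + 1), c l := by
  induction hf using Submodule.span_induction with
  | mem x hx =>
    obtain ⟨v, rfl, rfl⟩ := hx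
    refine ⟨fun l => if v.length = l then fw v else 0, fun l => ?_, ?_⟩
    · dsimp only
      split_ifs with h
      · exact Submodule.subset_span ⟨v, ⟨rfl, h⟩, rfl⟩
      · exact Submodule.zero_mem _
    · rw [Finset.sum_ite_eq, if_pos]
      rw [Finset.mem_range, Nat.lt_succ_iff]
      induction v with
      | nil => simp
      | cons g v ih => simp only [List.length_cons, wdeg_cons]; omega
  | zero => exact ⟨0, fun l => Submodule.zero_mem _, by simp⟩
  | add x y _ _ hx hy =>
    obtain ⟨c, hc, rfl⟩ := hx
    obtain ⟨d, hd, rfl⟩ := hy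
    exact ⟨c + d, fun l => Submodule.add_mem _ (hc l) (hd l), by simp [Finset.sum_add_distrib]⟩
  | smul a x _ hx =>
    obtain ⟨c, hc, rfl⟩ := hx
    exact ⟨a • c, fun l => Submodule.smul_mem _ _ (hc l), by simp [Finset.smul_sum]⟩

theorem span_eqOn {V : Type*} [AddCommGroup V] [Module ℂ V] {P : List (Gen M N) → Prop}
    (A B : F M N →ₗ[ℂ] V) (h : ∀ v, P v → A (fw v) = B (fw v)) {f : F M N}
    (hf : f ∈ Submodule.span ℂ (fw '' {v | P v})) : A f = B f := by
  have : Submodule.span ℂ (fw '' {v | P v}) ≤ LinearMap.eqLocus A B := by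
    rw [Submodule.span_le]
    rintro _ ⟨v, hv, rfl⟩
    exact h v hv
  exact this hf

/-- The map from `G[X]` to the associated graded algebra is injective.  The components of `f` of
given word length are treated by induction on the length `l`, with the functional detecting words
of length `l`: it kills the longer words by construction, and the shorter ones because their
monomials vanish in `G[X]`, which puts them in `Y_{p-1}`. -/
theorem piG_of_piY_mem {p : ℕ} {f : F M N} (hf : f ∈ homF M N p)
    (h : piY M N f ∈ filtPred M N p) : piG M N f = 0 := by
  obtain ⟨c, hc, rfl⟩ := homF_decomp hf
  have hc' : ∀ l, c l ∈ homF M N p := fun l =>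
    Submodule.span_mono (Set.image_mono fun v hv => hv.1) (hc l)
  rw [map_sum]
  refine Finset.sum_eq_zero fun l hl => ?_
  induction l using Nat.strong_induction_on with
  | _ l ih =>
    obtain ⟨φ, h1, h2, h3⟩ := exists_functional M N l p
    have hlow : ∀ y ∈ filtPred M N p, φ y = 0 := by
      intro y hy
      have : filtPred M N p ≤ LinearMap.ker φ := by
        rw [filtPred_eq, Submodule.span_le]
        rintro _ ⟨v, hv, rfl⟩
        exact h1 v hv
      exact this hy
    have h0 := hlow _ h
    rw [map_sum, map_sum, Finset.sum_eq_single_of_mem l hl] at h0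
    · have e : φ (piY M N (c l)) = (l.factorial : ℂ) • piG M N (c l) := by
        refine span_eqOn (φ ∘ₗ (piY M N).toLinearMap)
          ((l.factorial : ℂ) • (piG M N).toLinearMap) ?_ (hc l)
        rintro v ⟨hv, hvl⟩
        change φ (piY M N (fw v)) = (l.factorial : ℂ) • piG M N (fw v)
        rw [piY_fw, piG_fw, h3 v hv hvl]
      rw [e] at h0
      exact (smul_eq_zero.1 h0).resolve_left (by exact_mod_cast l.factorial_ne_zero)
    · intro l' hl' hne
      rcases lt_or_gt_of_ne hne with hlt | hgt
      · exact hlow _ (piY_mem_of_piG (hc' l') (ih l' hlt hl'))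
      · refine span_eqOn (φ ∘ₗ (piY M N).toLinearMap) 0 ?_ (hc l')
        rintro v ⟨hv, hvl⟩
        change φ (piY M N (fw v)) = 0
        rw [piY_fw, h2 v hv (hvl ▸ hgt)]

end free

/-! ### The grading of `G[X]` and the symbol maps -/

theorem mul_sub_mul_split {A : Type*} [Ring A] (x y a b : A) :
    x * y - a * b = (x - a) * y + a * (y - b) := by noncomm_ring

section final
variable {M N : ℕ}
open Polynomial

/-- The homomorphism `G[X] → G[X][X]` recording the degree, whose coefficients are the projections
on the homogeneous components. -/
noncomputable def gdeg (M N : ℕ) : GX M N →ₐ[ℂ] (GX M N)[X] :=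
  RingQuot.liftAlgHom ℂ ⟨FreeAlgebra.lift ℂ fun g => monomial (g.2.2 + 1) (Xg M N g), by
    intro x y hxy
    cases hxy with
    | comm g g' =>
      rw [neg_one_pow_mod_mul, map_smul, map_mul, map_mul, FreeAlgebra.lift_ι_apply,
        FreeAlgebra.lift_ι_apply, monomial_mul_monomial, monomial_mul_monomial, smul_monomial,
        add_comm (g'.2.2 + 1), Xg_comm]
    | sq g h =>
      have h0 : Xg M N g * Xg M N g = 0 := by
        have := RingQuot.mkAlgHom_rel ℂ (GRel.sq g h)
        rwa [map_mul, map_zero] at this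
      rw [map_mul, FreeAlgebra.lift_ι_apply, monomial_mul_monomial, h0, map_zero, map_zero]⟩

theorem gdeg_Xw (v : List (Gen M N)) : gdeg M N (Xw v) = monomial (wdeg v) (Xw v) := by
  induction v with
  | nil => simp
  | cons g v ih =>
    have : gdeg M N (Xg M N g) = monomial (g.2.2 + 1) (Xg M N g) := by
      simp [gdeg, Xg]
    rw [Xw_cons, map_mul, ih, this, monomial_mul_monomial, wdeg_cons]

theorem coeff_gdeg {p : ℕ} {x : GX M N} (hx : x ∈ gpiece M N p) (q : ℕ) :
    (gdeg M N x).coeff q = if p = q then x else 0 := by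
  rw [gpiece_eq] at hx
  induction hx using Submodule.span_induction with
  | mem x hx =>
    obtain ⟨v, rfl, rfl⟩ := hx
    rw [gdeg_Xw, coeff_monomial]
  | zero => simp
  | add x y _ _ hx hy =>
    rw [map_add, coeff_add, hx, hy]; split_ifs <;> simp
  | smul a x _ hx =>
    rw [map_smul, coeff_smul, hx]; split_ifs <;> simp

theorem gpiece_internal (M N : ℕ) : DirectSum.IsInternal (gpiece M N) := by
  constructor
  · intro x y hxy
    have key : ∀ (x : DirectSum ℕ fun p => gpiece M N p) (q : ℕ),
        (gdeg M N (DirectSum.coeAddMonoidHom (gpiece M N) x)).coeff q = x q := by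
      intro x q
      induction x using DirectSum.induction_on with
      | zero => simp
      | of p y =>
        rw [DirectSum.coeAddMonoidHom_of, coeff_gdeg y.2]
        split_ifs with h
        · subst h; rw [DirectSum.of_eq_same]
        · rw [DirectSum.of_eq_of_ne _ _ _ (Ne.symm h)]; rfl
      | add x y hx hy => rw [map_add, map_add, coeff_add, hx, hy]; rfl
    refine DFinsupp.ext fun q => Subtype.ext ?_
    rw [← key x q, ← key y q, hxy]
  · intro x
    have htop : (⨆ p, gpiece M N p) = ⊤ := by
      rw [eq_top_iff]
      rintro x -
      obtain ⟨f, rfl⟩ := RingQuot.mkAlgHom_surjective ℂ (GRel M N) x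
      refine fw_ind (piG M N).toLinearMap _ fun v => ?_
      change piG M N (fw v) ∈ _
      rw [piG_fw]
      refine Submodule.mem_iSup_of_mem (wdeg v) ?_
      rw [gpiece_eq]
      exact Submodule.subset_span ⟨v, rfl, rfl⟩
    have hx : x ∈ LinearMap.range (DirectSum.coeLinearMap (gpiece M N)) := by
      rw [DirectSum.range_coeLinearMap, htop]; trivial
    obtain ⟨y, hy⟩ := hx
    exact ⟨y, hy⟩

theorem exists_symbol {p : ℕ} {y : Y M N} (hy : y ∈ filt M N p) :
    ∃ f ∈ homF M N p, y - piY M N f ∈ filtPred M N p := by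
  rw [filt_eq] at hy
  induction hy using Submodule.span_induction with
  | mem x hx =>
    obtain ⟨v, hv, rfl⟩ := hx
    rcases lt_or_eq_of_le (show wdeg v ≤ p from hv) with h | h
    · exact ⟨0, Submodule.zero_mem _, by simpa using tgw_mem_filtPred h⟩
    · refine ⟨fw v, Submodule.subset_span ⟨v, h, rfl⟩, ?_⟩
      rw [piY_fw, sub_self]
      exact Submodule.zero_mem _
  | zero => exact ⟨0, Submodule.zero_mem _, by simp⟩
  | add x y _ _ hx hy =>
    obtain ⟨f, hf, hf'⟩ := hx
    obtain ⟨g, hg, hg'⟩ := hy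
    refine ⟨f + g, Submodule.add_mem _ hf hg, ?_⟩
    rw [map_add, add_sub_add_comm]
    exact Submodule.add_mem _ hf' hg'
  | smul a x _ hx =>
    obtain ⟨f, hf, hf'⟩ := hx
    refine ⟨a • f, Submodule.smul_mem _ _ hf, ?_⟩
    rw [map_smul, ← smul_sub]
    exact Submodule.smul_mem _ _ hf'

theorem symbol_unique {p : ℕ} {y : Y M N} {f g : F M N} (hf : f ∈ homF M N p)
    (hg : g ∈ homF M N p) (hf' : y - piY M N f ∈ filtPred M N p)
    (hg' : y - piY M N g ∈ filtPred M N p) : piG M N f = piG M N g := by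
  rw [← sub_eq_zero, ← map_sub]
  refine piG_of_piY_mem (Submodule.sub_mem _ hf hg) ?_
  rw [map_sub]
  have := Submodule.sub_mem _ hg' hf'
  rwa [sub_sub_sub_cancel_left] at this

/-- A homogeneous element of the free algebra representing `y` modulo `Y_{p-1}`. -/
noncomputable def symLift (p : ℕ) (y : filt M N p) : F M N := (exists_symbol y.2).choose

theorem symLift_mem (p : ℕ) (y : filt M N p) : symLift p y ∈ homF M N p :=
  (exists_symbol y.2).choose_spec.1

theorem symLift_spec (p : ℕ) (y : filt M N p) : (y : Y M N) - piY M N (symLift p y) ∈ filtPred M N p :=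
  (exists_symbol y.2).choose_spec.2

/-- The symbol map `Y_p → G[X]`: the class in `G[X]` of any homogeneous representative modulo
`Y_{p-1}`. -/
noncomputable def symb (M N p : ℕ) : filt M N p →ₗ[ℂ] GX M N where
  toFun y := piG M N (symLift p y)
  map_add' x y := by
    rw [← map_add]
    refine symbol_unique (symLift_mem p _) (Submodule.add_mem _ (symLift_mem p x) (symLift_mem p y))
      (symLift_spec p _) ?_
    rw [map_add, Submodule.coe_add, add_sub_add_comm]
    exact Submodule.add_mem _ (symLift_spec p x) (symLift_spec p y)
  map_smul' a x := by
    rw [RingHom.id_apply, ← map_smul]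
    refine symbol_unique (symLift_mem p _) (Submodule.smul_mem _ _ (symLift_mem p x))
      (symLift_spec p _) ?_
    rw [map_smul, Submodule.coe_smul, ← smul_sub]
    exact Submodule.smul_mem _ _ (symLift_spec p x)

theorem symb_eq {p : ℕ} (y : filt M N p) {f : F M N} (hf : f ∈ homF M N p)
    (h : (y : Y M N) - piY M N f ∈ filtPred M N p) : symb M N p y = piG M N f :=
  symbol_unique (symLift_mem p y) hf (symLift_spec p y) h

theorem piG_homF {p : ℕ} {f : F M N} (hf : f ∈ homF M N p) : piG M N f ∈ gpiece M N p := by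
  have : homF M N p ≤ (gpiece M N p).comap (piG M N).toLinearMap := by
    rw [homF, Submodule.span_le]
    rintro _ ⟨v, hv, rfl⟩
    change piG M N (fw v) ∈ gpiece M N p
    rw [piG_fw, gpiece_eq]
    exact Submodule.subset_span ⟨v, hv, rfl⟩
  exact this hf

theorem piY_homF {p : ℕ} {f : F M N} (hf : f ∈ homF M N p) : piY M N f ∈ filt M N p := by
  rw [← rees_homF hf]
  exact rees_mem f p

theorem homF_mul {p q : ℕ} {f g : F M N} (hf : f ∈ homF M N p) (hg : g ∈ homF M N q) :
    f * g ∈ homF M N (p + q) := by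
  refine span_mul_mem ?_ hf hg
  rintro _ ⟨u, rfl, rfl⟩ _ ⟨v, rfl, rfl⟩
  exact ⟨u ++ v, wdeg_append u v, fw_append u v⟩

end final

/-- **The associated graded algebra of `Y(gl(M|N))` is the free supercommutative polynomial
algebra `G[X]`**: multiplication respects the filtration, `G[X]` is graded by the `gpiece`s,
and there are ℂ-linear maps `ψ_p : Y_p → G[X]` with range the degree-`p` component and kernel
`Y_{p-1}`, i.e. linear isomorphisms `Y_p/Y_{p-1} ≅ G[X]_p`, which together respect
multiplication and send the image of `t^a_b[n]` in `Y_n/Y_{n-1}` to `X^a_b[n]`. -/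
theorem associated_graded_iso (M N : ℕ) (hMN : 1 ≤ M + N) :
    (∀ p q : ℕ, ∀ x ∈ filt M N p, ∀ y ∈ filt M N q, x * y ∈ filt M N (p + q)) ∧
    DirectSum.IsInternal (gpiece M N) ∧
    (∀ g : Gen M N, tg M N g ∈ filt M N (g.2.2 + 1)) ∧
    ∃ ψ : (p : ℕ) → (filt M N p →ₗ[ℂ] GX M N),
      (∀ p : ℕ, LinearMap.range (ψ p) = gpiece M N p) ∧
      (∀ (p : ℕ) (x : filt M N p), ψ p x = 0 ↔ (x : Y M N) ∈ filtPred M N p) ∧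
      (∀ (p q : ℕ) (x : filt M N p) (y : filt M N q)
          (h : (x : Y M N) * (y : Y M N) ∈ filt M N (p + q)),
        ψ (p + q) ⟨(x : Y M N) * (y : Y M N), h⟩ = ψ p x * ψ q y) ∧
      (∀ (g : Gen M N) (h : tg M N g ∈ filt M N (g.2.2 + 1)),
        ψ (g.2.2 + 1) ⟨tg M N g, h⟩ = Xg M N g) := by
  refine ⟨fun p q x hx y hy => filt_mul hx hy, gpiece_internal M N, tg_mem_filt, symb M N,
    fun p => ?_, fun p x => ?_, fun p q x y h => ?_, fun g h => ?_⟩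
  · refine le_antisymm ?_ ?_
    · rintro _ ⟨y, rfl⟩
      exact piG_homF (symLift_mem p y)
    · rw [gpiece_eq, Submodule.span_le]
      rintro _ ⟨v, hv, rfl⟩
      have hf : fw v ∈ homF M N p := Submodule.subset_span ⟨v, hv, rfl⟩
      refine ⟨⟨piY M N (fw v), piY_homF hf⟩, ?_⟩
      rw [symb_eq _ hf (by simp), piG_fw]
  · have hs := symLift_spec p x
    constructor
    · intro h
      have h1 := piY_mem_of_piG (symLift_mem p x) h
      have h2 := Submodule.add_mem _ hs h1
      rwa [sub_add_cancel] at h2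
    · intro h
      rw [symb_eq x (Submodule.zero_mem _) (by simpa using h), map_zero]
  · rw [symb_eq _ (homF_mul (symLift_mem p x) (symLift_mem q y)), map_mul]
    · rfl
    · have e : (x : Y M N) * y - piY M N (symLift p x * symLift q y) =
          (x - piY M N (symLift p x)) * y + piY M N (symLift p x) * (y - piY M N (symLift q y)) := by
        rw [map_mul]; exact mul_sub_mul_split _ _ _ _
      dsimp only
      rw [e]
      exact Submodule.add_mem _ (filtPred_mul (symLift_spec p x) y.2)
        (mul_filtPred (piY_homF (symLift_mem p x)) (symLift_spec q y))
  · have hf : fw [g] ∈ homF M N (g.2.2 + 1) := Submodule.subset_span ⟨[g], by simp, rfl⟩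
    rw [symb_eq _ hf, piG_fw, Xw_cons, Xw_nil, mul_one]
    rw [piY_fw, tgw_cons, tgw_nil, mul_one]
    simp

end SY
end

section
/- Evaluation homomorphism: Let U be the unital associative ℂ-algebra presented by generators E^a_b (a,b ∈ {1,…,M+N}) and relations E^a_b E^c_d − (−1)^{([a]+[b])([c]+[d])} E^c_d E^a_b = δ^c_b E^a_d − (−1)^{([a]+[b])([c]+[d])} δ^a_d E^c_b (the universal enveloping algebra of the Lie superalgebra gl(M|N)). Then the assignment t^a_b[n] ↦ δ_{n,1} E^a_b extends to a unique unital ℂ-algebra homomorphism Y(gl(M|N)) → U. -/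
/-!
The assignment defines a homomorphism out of the free algebra (`evalFree`), so the point is that
it respects the defining relations of the Yangian (`evalFree_rel`). In the relation at levels
`(m, n)`, every summand of the quadratic correction contains a factor of level
`m + n - 1 - r ≥ 2`, which is sent to `0`. What remains is trivial unless `m = n = 1`, since
otherwise both sides only involve monomials with a factor of level at least `2`; and for
`m = n = 1` it is the defining relation of `U(gl(M|N))`. Uniqueness holds because the `t^a_b[n]`
generate the Yangian.
-/

open scoped BigOperators TensorProduct

namespace SY

/-- The free algebra on the generators `E^a_b` of `gl(M|N)`. -/
abbrev FG (M N : ℕ) := FreeAlgebra ℂ (Fin (M + N) × Fin (M + N))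

/-- The defining relations of the universal enveloping algebra of `gl(M|N)`:
`E^a_b E^c_d − (−1)^{([a]+[b])([c]+[d])} E^c_d E^a_b
  = δ^c_b E^a_d − (−1)^{([a]+[b])([c]+[d])} δ^a_d E^c_b`. -/
inductive GLRel (M N : ℕ) : FG M N → FG M N → Prop
  | defining (a b c d : Fin (M + N)) :
      GLRel M N
        (FreeAlgebra.ι ℂ (a, b) * FreeAlgebra.ι ℂ (c, d)
          - sgn1 M a b c d • (FreeAlgebra.ι ℂ (c, d) * FreeAlgebra.ι ℂ (a, b)))
        ((if b = c then FreeAlgebra.ι ℂ (a, d) else 0)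
          - sgn1 M a b c d • (if d = a then FreeAlgebra.ι ℂ (c, b) else 0))

/-- The universal enveloping algebra `U(gl(M|N))`, presented by the generators `E^a_b`. -/
abbrev Ugl (M N : ℕ) := RingQuot (GLRel M N)

/-- The generator `E^a_b` of `U(gl(M|N))`. -/
noncomputable def Egen (M N : ℕ) (a b : Fin (M + N)) : Ugl M N :=
  RingQuot.mkAlgHom ℂ (GLRel M N) (FreeAlgebra.ι ℂ (a, b))

/-- The assignment `t^a_b[n] ↦ δ_{n,1} E^a_b` on the free algebra; the generator `(a, b, k)`
stands for `t^a_b[k+1]`, so the condition `n = 1` reads `k = 0`. -/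
noncomputable def evalFree (M N : ℕ) : F M N →ₐ[ℂ] Ugl M N :=
  FreeAlgebra.lift ℂ fun g : Gen M N => if g.2.2 = 0 then Egen M N g.1 g.2.1 else 0

lemma evalFree_T_one (M N : ℕ) (a b : Fin (M + N)) :
    evalFree M N (T M N a b 1) = Egen M N a b := by
  simp [evalFree, T]

lemma evalFree_T_of_two_le (M N : ℕ) (a b : Fin (M + N)) {n : ℕ} (hn : 2 ≤ n) :
    evalFree M N (T M N a b n) = 0 := by
  have h : n - 1 ≠ 0 := by omega
  simp [evalFree, T, h]

lemma Egen_rel (M N : ℕ) (a b c d : Fin (M + N)) :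
    Egen M N a b * Egen M N c d - sgn1 M a b c d • (Egen M N c d * Egen M N a b)
      = (if b = c then Egen M N a d else 0)
        - sgn1 M a b c d • (if d = a then Egen M N c b else 0) := by
  have h := RingQuot.mkAlgHom_rel ℂ (GLRel.defining (M := M) (N := N) a b c d)
  simpa only [Egen, map_sub, map_mul, map_smul, apply_ite (RingQuot.mkAlgHom ℂ (GLRel M N)),
    map_zero] using h

lemma evalFree_rel (M N : ℕ) {x y : F M N} (h : Rel M N x y) :
    evalFree M N x = evalFree M N y := by
  obtain ⟨a1, b1, a2, b2, m, n, hm, hn⟩ := h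
  -- Since `r < min m n`, the complementary level `m + n - 1 - r` is at least `max m n ≥ 2`.
  have hsum : evalFree M N (∑ r ∈ Finset.Ico 1 (min m n),
      (T M N a2 b1 r * T M N a1 b2 (m + n - 1 - r)
        - T M N a2 b1 (m + n - 1 - r) * T M N a1 b2 r)) = 0 := by
    rw [map_sum]
    refine Finset.sum_eq_zero fun r hr => ?_
    rw [Finset.mem_Ico, lt_min_iff] at hr
    have h2 : 2 ≤ m + n - 1 - r := by omega
    simp [evalFree_T_of_two_le M N _ _ h2]
  rw [map_add, map_smul, hsum, smul_zero, add_zero]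
  simp only [map_sub, map_mul, map_smul, apply_ite (evalFree M N), map_zero]
  by_cases h1 : m = 1 ∧ n = 1
  · obtain ⟨rfl, rfl⟩ := h1
    simpa only [Nat.add_sub_cancel, evalFree_T_one] using Egen_rel M N a1 b1 a2 b2
  · have h2 : 2 ≤ m + n - 1 := by omega
    rcases (by omega : 2 ≤ m ∨ 2 ≤ n) with h3 | h3 <;>
      simp [evalFree_T_of_two_le M N _ _ h2, evalFree_T_of_two_le M N _ _ h3]

/-- **Evaluation homomorphism**: the assignment `t^a_b[n] ↦ δ_{n,1} E^a_b` extends to a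
unique unital `ℂ`-algebra homomorphism `Y(gl(M|N)) → U(gl(M|N))`. -/
theorem evaluation_homomorphism (M N : ℕ) (hMN : 1 ≤ M + N) :
    ∃! h : Y M N →ₐ[ℂ] Ugl M N,
      ∀ (a b : Fin (M + N)) (n : ℕ), 1 ≤ n →
        h (t M N a b n) = if n = 1 then Egen M N a b else 0 := by
  refine ⟨RingQuot.liftAlgHom ℂ ⟨evalFree M N, fun _ _ h => evalFree_rel M N h⟩, ?_, ?_⟩
  · intro a b n hn
    rw [t, RingQuot.liftAlgHom_mkAlgHom_apply]
    split_ifs with h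
    · rw [h, evalFree_T_one]
    · exact evalFree_T_of_two_le M N a b (by omega)
  · intro h hh
    refine RingQuot.ringQuot_ext' ℂ _ _ (FreeAlgebra.hom_ext (funext fun g => ?_))
    obtain ⟨a, b, k⟩ := g
    have hk := hh a b (k + 1) (by omega)
    simp only [t, T, Nat.add_sub_cancel] at hk
    simp [hk, evalFree]

end SY
end

section
/- Let V be a finite-dimensional irreducible Y(gl(M|N))-module and set V_0 = {v ∈ V : t^a_b[n] v = 0 for all pairs (a,b) with a < b and all n ≥ 1}. Then V_0 ≠ 0. -/
/-!
The operators `t^a_a[1]` act as a Cartan subalgebra: `[t^c_c[1], t^a_b[n]]` equals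
`(δ_{ca} - δ_{cb}) t^a_b[n]`, because the quadratic part of the defining relation is an empty sum
when one of the two degrees is `1`, and the sign is `+1` since `t^c_c[1]` is even. Hence the grading
element `D = -∑ c, c • t^c_c[1]` satisfies `[D, t^a_b[n]] = (b - a) t^a_b[n]`, so for `a < b` the
operator `t^a_b[n]` raises the real part of a `D`-eigenvalue. A finite-dimensional nonzero complex
space has a `D`-eigenvector whose eigenvalue has maximal real part, and such a vector is killed by
every `t^a_b[n]` with `a < b`.
-/


open scoped BigOperators TensorProduct

namespace SY

/-- In every representation the Cartan generators `t^c_c[1]` act diagonally on the generators by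
commutators. -/
theorem cartan_comm (M N : ℕ) {A : Type*} [Ring A] [Algebra ℂ A] (ρ : Y M N →ₐ[ℂ] A)
    (c a b : Fin (M + N)) (n : ℕ) (hn : 1 ≤ n) :
    ρ (t M N c c 1) * ρ (t M N a b n) - ρ (t M N a b n) * ρ (t M N c c 1)
      = ((if c = a then 1 else 0) - (if c = b then 1 else 0) : ℂ) • ρ (t M N a b n) := by
  have h := congrArg ρ
    (RingQuot.mkAlgHom_rel ℂ (Rel.defining (M := M) (N := N) c c a b 1 n le_rfl hn))
  have hs : sgn1 M c c a b = 1 := by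
    rw [sgn1, ← two_mul, mul_assoc, pow_mul]
    simp
  have hm : min 1 n = 1 := min_eq_left hn
  have hn' : 1 + n - 1 = n := by omega
  rw [hs, hm, hn'] at h
  simp only [Finset.Ico_self, Finset.sum_empty, smul_zero, add_zero, one_smul] at h
  simp only [← AlgHom.comp_apply, map_sub, map_mul] at h
  simp only [AlgHom.comp_apply] at h
  change ρ (t M N c c 1) * ρ (t M N a b n) - ρ (t M N a b n) * ρ (t M N c c 1) = _ at h
  rw [h, sub_smul]
  congr 1
  · by_cases hc : c = a
    · subst hc; simp [t]
    · simp [hc]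
  · by_cases hc : c = b
    · subst hc; simp [t]
    · simp [hc, Ne.symm hc]

/-- The image in a representation `ρ` of the grading element `-∑ c, c • t^c_c[1]`, whose commutator
with `t^a_b[n]` is multiplication by `b - a`. The indices `c` are 0-based; shifting them would change
the element only by a multiple of the central `∑ c, t^c_c[1]`. -/
noncomputable def grading (M N : ℕ) {A : Type*} [Ring A] [Algebra ℂ A] (ρ : Y M N →ₐ[ℂ] A) : A :=
  ∑ c : Fin (M + N), (-((c : ℕ) : ℂ)) • ρ (t M N c c 1)

theorem grading_comm (M N : ℕ) {A : Type*} [Ring A] [Algebra ℂ A] (ρ : Y M N →ₐ[ℂ] A)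
    (a b : Fin (M + N)) (n : ℕ) (hn : 1 ≤ n) :
    grading M N ρ * ρ (t M N a b n)
      = ρ (t M N a b n) * grading M N ρ + (((b : ℕ) : ℂ) - ((a : ℕ) : ℂ)) • ρ (t M N a b n) := by
  rw [← sub_eq_iff_eq_add', grading, Finset.sum_mul, Finset.mul_sum, ← Finset.sum_sub_distrib]
  simp_rw [smul_mul_assoc, mul_smul_comm, ← smul_sub, cartan_comm M N ρ _ a b n hn, smul_smul,
    ← Finset.sum_smul]
  congr 1
  simp [mul_sub, Finset.sum_sub_distrib]
  ring

/-- An endomorphism of a nonzero finite-dimensional complex space has an eigenvalue of maximal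
real part. -/
theorem exists_eigenvalue_max_re {V : Type} [AddCommGroup V] [Module ℂ V]
    [FiniteDimensional ℂ V] [Nontrivial V] (E : Module.End ℂ V) :
    ∃ μ : ℂ, E.HasEigenvalue μ ∧ ∀ ν : ℂ, E.HasEigenvalue ν → ν.re ≤ μ.re := by
  obtain ⟨μ, hμ, hmax⟩ := Set.exists_max_image {μ | E.HasEigenvalue μ} Complex.re
    (Module.End.finite_hasEigenvalue E) (Module.End.exists_eigenvalue E)
  exact ⟨μ, hμ, hmax⟩

/-- **Lemma 2, part 1**: for a finite dimensional irreducible `Y(gl(M|N))`-module `V`, the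
subspace `V_0 = {v : t^a_b[n] v = 0 for all a < b, n ≥ 1}` is nonzero. -/
theorem V0_nonzero (M N : ℕ) (hMN : 1 ≤ M + N)
    (V : Type) [AddCommGroup V] [Module ℂ V] [FiniteDimensional ℂ V]
    (ρ : Y M N →ₐ[ℂ] Module.End ℂ V) (hirr : IsIrreducibleRep M N ρ) :
    ∃ v : V, v ≠ 0 ∧
      ∀ a b : Fin (M + N), a < b → ∀ n : ℕ, 1 ≤ n → ρ (t M N a b n) v = 0 := by
  have : Nontrivial V := by
    obtain ⟨v, hv⟩ := hirr.1
    exact ⟨v, 0, hv⟩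
  obtain ⟨μ, hμ, hmax⟩ := exists_eigenvalue_max_re (grading M N ρ)
  obtain ⟨v, hv⟩ := hμ.exists_hasEigenvector
  refine ⟨v, hv.2, fun a b hab n hn => ?_⟩
  by_contra hne
  have hE : grading M N ρ (ρ (t M N a b n) v)
      = (μ + (((b : ℕ) : ℂ) - ((a : ℕ) : ℂ))) • ρ (t M N a b n) v := by
    have h := congrArg (fun y => y v) (grading_comm M N ρ a b n hn)
    simp only [Module.End.mul_apply, LinearMap.add_apply,
      LinearMap.smul_apply, map_smul, hv.apply_eq_smul] at h
    rw [h, add_smul]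
  have hle := hmax _ (Module.End.hasEigenvalue_of_hasEigenvector
    (Module.End.hasEigenvector_iff.mpr ⟨Module.End.mem_eigenspace_iff.mpr hE, hne⟩))
  have hlt : ((a : ℕ) : ℝ) < ((b : ℕ) : ℝ) := by exact_mod_cast hab
  simp only [Complex.add_re, Complex.sub_re, Complex.natCast_re] at hle
  linarith

end SY
end

section
/- Let V be a Y(gl(M|N))-module and set V_0 = {v ∈ V : t^a_b[n] v = 0 for all pairs (a,b) with a < b and all n ≥ 1}. Then the diagonal generators commute on V_0: for all a, b ∈ {1,…,M+N}, all m, n ≥ 1, and all v ∈ V_0, t^a_a[m] t^b_b[n] v = t^b_b[n] t^a_a[m] v. -/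
/-!
The commutator of two diagonal generators `t^a_a[m]`, `t^b_b[n]` is, up to sign, the sum over
`1 ≤ r < min m n` of `t^b_a[r] t^a_b[s] - t^b_a[s] t^a_b[r]` with `s = m + n - 1 - r`
(`diag_relation`). If `a < b`, the right-hand factors `t^a_b` annihilate the vectors of `V_0`
(`diag_commute_lt`); the case `b < a` follows by exchanging the roles of the two generators. If
`a = b`, the summands are commutators `[t^a_a[r], t^a_a[s]]` with `r < min m n`, so the generators
commute already in the algebra, by induction on `min m n` (`diag_commute_same`).
-/

open scoped BigOperators TensorProduct

namespace SY

/-- On diagonal generators the sign of the supercommutator is trivial and the two linear terms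
cancel, so the defining relation only has its quadratic part. -/
theorem diag_relation (M N : ℕ) (a b : Fin (M + N)) (m n : ℕ) (hm : 1 ≤ m) (hn : 1 ≤ n) :
    t M N a a m * t M N b b n - t M N b b n * t M N a a m =
      sgn2 M a a b • ∑ r ∈ Finset.Ico 1 (min m n),
        (t M N b a r * t M N a b (m + n - 1 - r)
          - t M N b a (m + n - 1 - r) * t M N a b r) := by
  have h := RingQuot.mkAlgHom_rel ℂ (Rel.defining a a b b m n hm hn)
  have hs : sgn1 M a a b b = 1 := by
    rw [sgn1, ← two_mul, mul_assoc, pow_mul]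
    simp
  have hlin : (if a = b then T M N a b (m + n - 1) else 0)
      - (if b = a then T M N b a (m + n - 1) else 0) = 0 := by
    by_cases hab : a = b
    · subst hab
      simp
    · simp [hab, Ne.symm hab]
  rw [hs, one_smul, one_smul, hlin, zero_add] at h
  simpa only [t, map_sub, map_mul, map_smul, map_sum] using h

/-- Every term on the right of `diag_relation` with `b = a` is a commutator of the same kind with
a smaller value of `min m n`, whence commutativity by strong induction. -/
theorem diag_commute_same (M N : ℕ) (a : Fin (M + N)) (k : ℕ) :
    ∀ m n : ℕ, 1 ≤ m → 1 ≤ n → min m n = k →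
      t M N a a m * t M N a a n = t M N a a n * t M N a a m := by
  induction k using Nat.strong_induction_on with
  | _ k ih =>
    intro m n hm hn hk
    rw [← sub_eq_zero, diag_relation M N a a m n hm hn, Finset.sum_eq_zero, smul_zero]
    intro r hr
    rw [Finset.mem_Ico] at hr
    rw [sub_eq_zero]
    exact ih (min r (m + n - 1 - r)) (by omega) r (m + n - 1 - r) hr.1 (by omega) rfl

/-- For `a < b` every quadratic term of `diag_relation` ends in some `t^a_b[s]`, which
annihilates `v`. -/
theorem diag_commute_lt (M N : ℕ) (V : Type) [AddCommGroup V] [Module ℂ V]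
    (ρ : Y M N →ₐ[ℂ] Module.End ℂ V) (v : V)
    (hv : ∀ a b : Fin (M + N), a < b → ∀ n : ℕ, 1 ≤ n → ρ (t M N a b n) v = 0)
    (a b : Fin (M + N)) (hab : a < b) (m n : ℕ) (hm : 1 ≤ m) (hn : 1 ≤ n) :
    ρ (t M N a a m) (ρ (t M N b b n) v) = ρ (t M N b b n) (ρ (t M N a a m) v) := by
  have h := congrArg (fun y => ρ y v) (diag_relation M N a b m n hm hn)
  simp only [map_sub, map_mul, map_smul, map_sum, LinearMap.sub_apply, Module.End.mul_apply,
    LinearMap.smul_apply, LinearMap.sum_apply] at h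
  rw [← sub_eq_zero, h, Finset.sum_eq_zero, smul_zero]
  intro r hr
  rw [Finset.mem_Ico] at hr
  rw [hv a b hab r hr.1, hv a b hab (m + n - 1 - r) (by omega), map_zero, map_zero, sub_zero]

/-- **Lemma 2, part 3**: in any `Y(gl(M|N))`-module, the diagonal generators commute on the
subspace `V_0 = {v : t^a_b[n] v = 0 for all a < b, n ≥ 1}`. -/
theorem diagonal_commute_on_V0 (M N : ℕ) (hMN : 1 ≤ M + N)
    (V : Type) [AddCommGroup V] [Module ℂ V]
    (ρ : Y M N →ₐ[ℂ] Module.End ℂ V) (v : V)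
    (hv : ∀ a b : Fin (M + N), a < b → ∀ n : ℕ, 1 ≤ n → ρ (t M N a b n) v = 0) :
    ∀ (a b : Fin (M + N)) (m n : ℕ), 1 ≤ m → 1 ≤ n →
      ρ (t M N a a m) (ρ (t M N b b n) v) = ρ (t M N b b n) (ρ (t M N a a m) v) := by
  intro a b m n hm hn
  rcases lt_trichotomy a b with hab | rfl | hab
  · exact diag_commute_lt M N V ρ v hv a b hab m n hm hn
  · simpa only [map_mul, Module.End.mul_apply] using
      congrArg (fun y => ρ y v) (diag_commute_same M N a _ m n hm hn rfl)
  · exact (diag_commute_lt M N V ρ v hv b a hab n m hn hm).symm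

end SY
end
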